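/- arXiv:math/0609258 — 3 statements merged into one kernel-verified Lean document; each statement's English description precedes it below -/
import Mathlib

section
/- Let λ ⊢ n and ρ ⊢ n−1 be arbitrary partitions, and for partitions θ ⊢ m and κ ⊢ m let M(κ,θ) = ⟨φ_θ, χ_{SP_κ}⟩ denote the multiplicity of the Specht module SP_κ in the representation of S_m induced from the identity representation of the Young subgroup H(θ). Then Σ_{μ ⊢ n, μ ≻ ρ} M(μ,λ) = Σ_{γ ⊢ n−1, γ ≺ λ} c(λ,γ) · M(ρ,γ). -/
open scoped Classical

noncomputable section

open MvPolynomial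

/-- `Covers λ γ` : γ ≺ λ, i.e. γ is obtained from λ by decreasing exactly one part by 1. -/
def Covers (lam gam : YoungDiagram) : Prop :=
  ∃ i, gam.rowLen i + 1 = lam.rowLen i ∧ ∀ j, j ≠ i → gam.rowLen j = lam.rowLen j

/-- `cCoeff λ γ` : for `γ ≺ λ` obtained by decreasing a part of λ equal to `l`,
this is the number of parts of λ equal to `l`. -/
noncomputable def cCoeff (lam gam : YoungDiagram) : ℕ :=
  Set.ncard {j | ∃ i, gam.rowLen i + 1 = lam.rowLen i ∧ lam.rowLen j = lam.rowLen i}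

/-- Partial sums of the row lengths of a Young diagram. -/
def rowPartialSum (lam : YoungDiagram) (i : ℕ) : ℕ :=
  ∑ j ∈ Finset.range i, lam.rowLen j

/-- The (0-indexed) row of the canonical tableau of shape `lam` containing the entry `m`
(the entries `0,…,n-1` fill the cells consecutively row by row). -/
def rowIndex (lam : YoungDiagram) (m : ℕ) : ℕ :=
  ((Finset.range (m + 1)).filter fun i => rowPartialSum lam (i + 1) ≤ m).card

/-- The Young subgroup `H(λ) ≤ S_n`: permutations preserving each row of the canonical
tableau of shape `λ`. -/
def youngH (n : ℕ) (lam : YoungDiagram) : Subgroup (Equiv.Perm (Fin n)) where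
  carrier := {g | ∀ m : Fin n, rowIndex lam (g m) = rowIndex lam m}
  one_mem' := by intro m; simp
  mul_mem' := by
    intro a b ha hb m
    have h1 := ha (b m)
    have h2 := hb m
    simpa [Equiv.Perm.mul_apply] using h1.trans h2
  inv_mem' := by
    intro a ha m
    simpa using (ha (a⁻¹ m)).symm

/-- The character of the representation induced from the trivial representation of a
subgroup `H`:  `φ(g) = (1/|H|) · #{x : x⁻¹ g x ∈ H}`. -/
noncomputable def indTrivChar {G : Type*} [Group G] (H : Subgroup G) (g : G) : ℂ :=
  (Nat.card H : ℂ)⁻¹ * (Nat.card {x : G // x⁻¹ * g * x ∈ H} : ℂ)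

/-- The inner product of class functions on a finite group:
`⟨a,b⟩ = (1/|G|) Σ_g a g * conj (b g)`. -/
noncomputable def innerChar {G : Type*} [Group G] [Fintype G] (a b : G → ℂ) : ℂ :=
  (Fintype.card G : ℂ)⁻¹ * ∑ g : G, a g * (starRingEnd ℂ) (b g)

/-- The Specht polynomial of a bijective filling `T` of the cells of `lam` by `0,…,n-1`:
the product over all pairs of cells in the same column (the first strictly above the
second) of the differences of the corresponding variables — i.e. the product of the
column Vandermonde determinants. -/
noncomputable def spechtPoly (n : ℕ) (lam : YoungDiagram) (T : lam.cells ≃ Fin n) :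
    MvPolynomial (Fin n) ℂ :=
  ∏ p ∈ Finset.univ.filter
      (fun p : lam.cells × lam.cells =>
        (p.1 : ℕ × ℕ).2 = (p.2 : ℕ × ℕ).2 ∧ (p.1 : ℕ × ℕ).1 < (p.2 : ℕ × ℕ).1),
    (X (T p.1) - X (T p.2))

/-- The Specht module: the linear span of all Specht polynomials of shape `lam`. -/
noncomputable def spechtModule (n : ℕ) (lam : YoungDiagram) :
    Submodule ℂ (MvPolynomial (Fin n) ℂ) :=
  Submodule.span ℂ (Set.range (spechtPoly n lam))

lemma rename_spechtPoly (n : ℕ) (lam : YoungDiagram) (T : lam.cells ≃ Fin n)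
    (g : Equiv.Perm (Fin n)) :
    MvPolynomial.rename g (spechtPoly n lam T) = spechtPoly n lam (T.trans g) := by
  simp only [spechtPoly, map_prod, map_sub, MvPolynomial.rename_X]
  rfl

lemma spechtModule_invariant (n : ℕ) (lam : YoungDiagram) (g : Equiv.Perm (Fin n)) :
    ∀ p ∈ spechtModule n lam,
      (MvPolynomial.rename (σ := Fin n) (R := ℂ) g).toLinearMap p ∈ spechtModule n lam := by
  intro p hp
  induction hp using Submodule.span_induction with
  | mem x hx =>
      obtain ⟨T, rfl⟩ := hx
      simp only [AlgHom.toLinearMap_apply, rename_spechtPoly]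
      exact Submodule.subset_span ⟨_, rfl⟩
  | zero => simp
  | add x y _ _ hx hy => rw [map_add]; exact add_mem hx hy
  | smul a x _ hx => rw [map_smul]; exact Submodule.smul_mem _ _ hx

/-- The character of the representation of the symmetric group on the Specht module
(permutations act on polynomials by permuting the variables). -/
noncomputable def spechtChar (n : ℕ) (lam : YoungDiagram) (g : Equiv.Perm (Fin n)) : ℂ :=
  LinearMap.trace ℂ (spechtModule n lam)
    (LinearMap.restrict (MvPolynomial.rename (σ := Fin n) (R := ℂ) g).toLinearMap
      (spechtModule_invariant n lam g))

/-- `M(κ,θ)`: the multiplicity `⟨φ_θ, χ_{SP_κ}⟩` of the Specht module `SP_κ` in the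
representation of `S_m` induced from the identity representation of `H(θ)`. -/
noncomputable def Mmult (m : ℕ) (kappa theta : YoungDiagram) : ℂ :=
  innerChar (indTrivChar (youngH m theta)) (spechtChar m kappa)

/-!
Cycle types that forget fixed points let one function `c : Multiset ℕ → ℂ` serve as a class
function on all symmetric groups at once, and inducing `c` from `S_{n-1}` to `S_n` multiplies it
by the number of fixed points. Specht characters are of this form.

Let `b(μ,ρ)` be the multiplicity of `SP_ρ` in the restriction of `SP_μ`. If `μ ≻ ρ`, then
`b(μ,ρ) ≥ 1`, because the leading coefficient, in the variable of the additional corner, of a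
Specht polynomial of shape `μ` is up to sign one of shape `ρ`. Since `Res Ind χ = χ + Ind Res χ`,
on the other hand, `Σ_μ b(μ,ρ)² = 1 + Σ_σ b(ρ,σ)²`, and by induction this is one more than the
number of `σ ≺ ρ`, which is at most the number of `μ ≻ ρ`. Hence `b(μ,ρ)` is one for `μ ≻ ρ` and
zero otherwise, that is, `Σ_{μ ≻ ρ} χ_μ = Ind χ_ρ`.

By Frobenius reciprocity `M(μ,λ)` is the mean of `χ_μ` over `H(λ)`, so the left side of the
recurrence is the mean over `H(λ)` of `χ_ρ(g)` times the number of fixed points of `g`. Split this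
according to the fixed point `j`. If `j` lies in a row of length `l`, its stabilizer has index `l`
in `H(λ)` and is a Young subgroup of type `γ`, where `γ` arises from `λ` by decreasing a part `l`.
The `l` letters of each of the `c(λ,γ)` rows of length `l` thus contribute one copy of the mean of
`χ_ρ` over `H(γ)`, which is `M(ρ,γ)`.
-/

/-! ### Young diagrams -/

section Diagrams

variable {lam mu nu rho gam delta : YoungDiagram} {i j k : ℕ}

lemma mem_cells_iff_lt_rowLen {c : ℕ × ℕ} : c ∈ mu.cells ↔ c.2 < mu.rowLen c.1 :=
  YoungDiagram.mem_iff_lt_rowLen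

lemma eq_of_rowLen_eq (h : ∀ i, mu.rowLen i = nu.rowLen i) : mu = nu := by
  apply YoungDiagram.ext
  ext c
  rw [mem_cells_iff_lt_rowLen, mem_cells_iff_lt_rowLen, h]

lemma exists_rowLen_eq {f : ℕ → ℕ} (hf : Antitone f) {N : ℕ} (hN : f N = 0) :
    ∃ mu : YoungDiagram, ∀ i, mu.rowLen i = f i := by
  let mu : YoungDiagram :=
    { cells := {c ∈ Finset.range N ×ˢ Finset.range (f 0) | c.2 < f c.1}
      isLowerSet := by
        rintro ⟨a, b⟩ ⟨c, d⟩ ⟨hca, hdb⟩ h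
        simp only [Finset.coe_filter, Finset.mem_product, Finset.mem_range,
          Set.mem_ofPred_eq] at h hca hdb ⊢
        have := hf hca
        omega }
  refine ⟨mu, fun i => eq_of_forall_lt_iff fun j => ?_⟩
  rw [← YoungDiagram.mem_iff_lt_rowLen, ← YoungDiagram.mem_cells, Finset.mem_filter,
    Finset.mem_product, Finset.mem_range, Finset.mem_range]
  refine ⟨And.right, fun h => ⟨⟨?_, h.trans_le (hf i.zero_le)⟩, h⟩⟩
  by_contra! hi
  exact (h.trans_le (hf hi)).not_ge (hN.trans_le j.zero_le)

lemma rowLen_le_card (mu : YoungDiagram) (i : ℕ) : mu.rowLen i ≤ mu.card := by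
  rw [YoungDiagram.rowLen_eq_card]
  exact Finset.card_filter_le _ _

lemma colLen_le_card (mu : YoungDiagram) (j : ℕ) : mu.colLen j ≤ mu.card := by
  rw [YoungDiagram.colLen_eq_card]
  exact Finset.card_filter_le _ _

lemma lt_card_of_rowLen_pos (h : 0 < mu.rowLen i) : i < mu.card :=
  (YoungDiagram.mem_iff_lt_colLen.1 (YoungDiagram.mem_iff_lt_rowLen.2 h)).trans_le
    (colLen_le_card mu 0)

lemma rowLen_eq_zero_of_card_le (h : mu.card ≤ i) : mu.rowLen i = 0 := by
  by_contra hi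
  exact h.not_gt (lt_card_of_rowLen_pos (Nat.pos_of_ne_zero hi))

lemma fst_lt_card {c : ℕ × ℕ} (hc : c ∈ mu.cells) : c.1 < mu.card :=
  lt_card_of_rowLen_pos (c.2.zero_le.trans_lt (mem_cells_iff_lt_rowLen.1 hc))

lemma rowPartialSum_succ (mu : YoungDiagram) (i : ℕ) :
    rowPartialSum mu (i + 1) = rowPartialSum mu i + mu.rowLen i :=
  Finset.sum_range_succ _ _

lemma rowPartialSum_mono (mu : YoungDiagram) : Monotone (rowPartialSum mu) :=
  monotone_nat_of_le_succ fun i => by rw [rowPartialSum_succ]; exact Nat.le_add_right _ _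

lemma card_filter_fst_lt (mu : YoungDiagram) (k : ℕ) :
    {c ∈ mu.cells | c.1 < k}.card = rowPartialSum mu k := by
  rw [rowPartialSum, Finset.card_eq_sum_card_fiberwise (f := Prod.fst) (t := Finset.range k)
    fun c hc => Finset.mem_coe.2 (Finset.mem_range.2 (Finset.mem_filter.1 hc).2)]
  refine Finset.sum_congr rfl fun i hi => ?_
  rw [YoungDiagram.rowLen_eq_card, YoungDiagram.row, Finset.filter_filter]
  congr 1
  refine Finset.filter_congr fun c _ => ⟨And.right, fun h => ⟨?_, h⟩⟩
  exact h ▸ Finset.mem_range.1 hi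

lemma rowPartialSum_card (mu : YoungDiagram) : rowPartialSum mu mu.card = mu.card := by
  rw [← card_filter_fst_lt, Finset.filter_true_of_mem fun c => fst_lt_card]

lemma rowPartialSum_le_card (mu : YoungDiagram) (k : ℕ) : rowPartialSum mu k ≤ mu.card := by
  rw [← card_filter_fst_lt]
  exact Finset.card_filter_le _ _

lemma eq_of_rowPartialSum_eq (h : ∀ k, rowPartialSum mu k = rowPartialSum nu k) : mu = nu := by
  refine eq_of_rowLen_eq fun i => ?_
  have := h (i + 1)
  rw [rowPartialSum_succ, rowPartialSum_succ, h i] at this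
  exact Nat.add_left_cancel this

/-! ### Adding and removing a cell -/

/-- `mu` arises from `rho` by adding a cell at the end of row `i`; thus `Covers mu rho` means
that this holds for some `i`. -/
def CoversAt (mu rho : YoungDiagram) (i : ℕ) : Prop :=
  rho.rowLen i + 1 = mu.rowLen i ∧ ∀ j, j ≠ i → rho.rowLen j = mu.rowLen j

namespace CoversAt

lemma covers (h : CoversAt mu rho i) : Covers mu rho := ⟨i, h⟩

lemma cells_eq (h : CoversAt mu rho i) : mu.cells = insert (i, rho.rowLen i) rho.cells := by
  ext ⟨a, b⟩
  rw [Finset.mem_insert, mem_cells_iff_lt_rowLen, mem_cells_iff_lt_rowLen, Prod.mk.injEq]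
  rcases eq_or_ne a i with rfl | ha
  · rw [← h.1]
    simp only [true_and]
    omega
  · simp [ha, h.2 a ha]

lemma corner_notMem (rho : YoungDiagram) (i : ℕ) : (i, rho.rowLen i) ∉ rho.cells := by
  rw [mem_cells_iff_lt_rowLen]
  exact lt_irrefl _

lemma card_eq (h : CoversAt mu rho i) : mu.card = rho.card + 1 := by
  rw [YoungDiagram.card, h.cells_eq, Finset.card_insert_of_notMem (corner_notMem rho i)]

lemma row_unique (h : CoversAt mu rho i) (h' : rho.rowLen j + 1 = mu.rowLen j) : j = i := by
  by_contra hne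
  have := h.2 j hne
  omega

lemma lower_unique (h : CoversAt lam gam i) (h' : CoversAt lam delta i) : gam = delta := by
  refine eq_of_rowLen_eq fun k => ?_
  rcases eq_or_ne k i with rfl | hk
  · exact Nat.succ_injective (h.1.trans h'.1.symm)
  · rw [h.2 k hk, h'.2 k hk]

lemma rowLen_succ_lt (h : CoversAt lam gam i) (hij : i < j) : lam.rowLen j < lam.rowLen i := by
  rw [← h.1, ← h.2 j hij.ne', Nat.lt_succ_iff]
  exact gam.rowLen_anti i j hij.le

end CoversAt

lemma Covers.card_eq (h : Covers mu rho) : mu.card = rho.card + 1 :=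
  let ⟨_, hi⟩ := h
  CoversAt.card_eq hi

lemma exists_rowLen_eq_update (h : Antitone (Function.update mu.rowLen i k)) :
    ∃ nu : YoungDiagram, ∀ j, nu.rowLen j = Function.update mu.rowLen i k j := by
  refine exists_rowLen_eq (N := mu.card + i + 1) h ?_
  rw [Function.update_of_ne (by omega), rowLen_eq_zero_of_card_le (by omega)]

lemma exists_coversAt_add (h : ∀ j < i, rho.rowLen i < rho.rowLen j) :
    ∃ mu, CoversAt mu rho i := by
  obtain ⟨mu, hmu⟩ : ∃ mu : YoungDiagram, ∀ j,
      mu.rowLen j = Function.update rho.rowLen i (rho.rowLen i + 1) j := by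
    refine exists_rowLen_eq_update fun a b hab => ?_
    have hanti := rho.rowLen_anti a b hab
    have ha := h a
    simp only [Function.update_apply]
    split_ifs with hb hia hia <;> subst_vars <;> omega
  exact ⟨mu, by simp [hmu], fun j hj => by simp [hmu, hj]⟩

lemma exists_coversAt_remove (h : ∀ j, i < j → lam.rowLen j < lam.rowLen i) :
    ∃ gam, CoversAt lam gam i := by
  obtain ⟨gam, hgam⟩ : ∃ gam : YoungDiagram, ∀ j,
      gam.rowLen j = Function.update lam.rowLen i (lam.rowLen i - 1) j := by
    refine exists_rowLen_eq_update fun a b hab => ?_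
    have hanti := lam.rowLen_anti a b hab
    have hb := h b
    simp only [Function.update_apply]
    split_ifs with hbi hai hai <;> subst_vars <;> omega
  have hpos : 0 < lam.rowLen i := (Nat.zero_le _).trans_lt (h (i + 1) i.lt_succ_self)
  exact ⟨gam, by simp [hgam, Nat.sub_add_cancel hpos], fun j hj => by simp [hgam, hj]⟩

end Diagrams

/-! ### Diagrams of a given size -/

/-- The Young diagrams with `n` cells, i.e. the partitions of `n`. -/
abbrev DiagramOfSize (n : ℕ) : Type := {mu : YoungDiagram // mu.card = n}

instance (n : ℕ) : Finite (DiagramOfSize n) := by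
  have hsub (mu : DiagramOfSize n) : mu.1.cells ⊆ Finset.range n ×ˢ Finset.range n := fun c hc => by
    have hcol := rowLen_le_card mu.1 c.1
    rw [mu.2] at hcol
    exact Finset.mem_product.2 ⟨Finset.mem_range.2 (mu.2 ▸ fst_lt_card hc),
      Finset.mem_range.2 ((mem_cells_iff_lt_rowLen.1 hc).trans_le hcol)⟩
  refine Finite.of_injective (β := (Finset.range n ×ˢ Finset.range n).powerset)
    (fun mu => ⟨mu.1.cells, Finset.mem_powerset.2 (hsub mu)⟩) fun mu nu h => ?_
  exact Subtype.ext (YoungDiagram.ext (congrArg Subtype.val h))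

instance (n : ℕ) : Fintype (DiagramOfSize n) := Fintype.ofFinite _

lemma finsum_diagramOfSize {M : Type*} [AddCommMonoid M] (n : ℕ) (P : YoungDiagram → Prop)
    (f : YoungDiagram → M) :
    ∑ᶠ (mu : YoungDiagram) (_ : mu.card = n ∧ P mu), f mu =
      ∑ mu : DiagramOfSize n with P mu.1, f mu.1 := by
  rw [Finset.sum_filter, ← finsum_eq_sum_of_fintype,
    finsum_subtype_eq_finsum_cond (fun mu : YoungDiagram => mu.card = n)
      (f := fun mu => if P mu then f mu else 0)]
  simp only [finsum_eq_if, ite_and]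

lemma card_eq_sum_rowLens (mu : YoungDiagram) : mu.card = mu.rowLens.sum := by
  have hzero (i : ℕ) (hi : i ∉ Finset.range (mu.colLen 0)) : mu.rowLen i = 0 := by
    by_contra h
    exact hi (Finset.mem_range.2 (YoungDiagram.mem_iff_lt_colLen.1
      (YoungDiagram.mem_iff_lt_rowLen.2 (Nat.pos_of_ne_zero h))))
  rw [← rowPartialSum_card, rowPartialSum, ← Finset.sum_subset
    (Finset.range_subset_range.2 (colLen_le_card mu 0)) fun i _ => hzero i]
  rfl

lemma card_partition_le_card_diagramOfSize (n : ℕ) :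
    Fintype.card n.Partition ≤ Fintype.card (DiagramOfSize n) := by
  have hpos (p : n.Partition) : ∀ x ∈ p.parts.sort (· ≥ ·), 0 < x := fun x hx =>
    p.parts_pos (by simpa using hx)
  have hsort (p : n.Partition) : (p.parts.sort (· ≥ ·)).SortedGE :=
    (Multiset.pairwise_sort p.parts (· ≥ ·)).sortedGE
  have hrow (p : n.Partition) :
      (YoungDiagram.ofRowLens _ (hsort p)).rowLens = p.parts.sort (· ≥ ·) :=
    YoungDiagram.rowLens_ofRowLens_eq_self (hpos p)
  refine Fintype.card_le_of_injective (fun p => ⟨YoungDiagram.ofRowLens _ (hsort p), ?_⟩)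
    fun p q h => ?_
  · rw [card_eq_sum_rowLens, hrow, ← Multiset.sum_coe, Multiset.sort_eq, p.parts_sum]
  · have hpq := congrArg (fun mu : DiagramOfSize n => mu.1.rowLens) h
    simp only [hrow] at hpq
    exact Nat.Partition.ext (by rw [← Multiset.sort_eq p.parts (· ≥ ·), hpq, Multiset.sort_eq])

lemma exists_coversAt_succ_row {rho gam : YoungDiagram} {i : ℕ} (h : CoversAt rho gam i) :
    ∃ mu, CoversAt mu rho (i + 1) :=
  exists_coversAt_add fun j hj => (h.rowLen_succ_lt i.lt_succ_self).trans_le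
    (rho.rowLen_anti j i (Nat.le_of_lt_succ hj))

lemma one_add_card_covers_le (m : ℕ) (rho : DiagramOfSize (m + 1)) :
    1 + Fintype.card {gam : DiagramOfSize m // Covers rho.1 gam} ≤
      Fintype.card {mu : DiagramOfSize (m + 2) // Covers mu.1 rho} := by
  -- A removable cell in row `i` makes row `i + 1` addable, and row `0` is always addable.
  choose row hrow using fun gam : {gam : DiagramOfSize m // Covers rho.1 gam} => gam.2
  let newRow (o : Option {gam : DiagramOfSize m // Covers rho.1 gam}) : ℕ :=
    o.elim 0 fun gam => row gam + 1
  have hex : ∀ o, ∃ mu, CoversAt mu rho (newRow o)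
    | none => exists_coversAt_add fun j hj => absurd hj j.not_lt_zero
    | some gam => exists_coversAt_succ_row (hrow gam)
  choose up hup using hex
  have hnewRow : Function.Injective newRow := by
    rintro (_ | gam) (_ | delta) h
    · rfl
    · exact absurd h.symm (Nat.succ_ne_zero _)
    · exact absurd h (Nat.succ_ne_zero _)
    · have hgam := hrow gam
      rw [Nat.succ_injective h] at hgam
      exact congrArg some (Subtype.ext (Subtype.ext (CoversAt.lower_unique hgam (hrow delta))))
  rw [add_comm, ← Fintype.card_option]
  refine Fintype.card_le_of_injective
    (fun o => ⟨⟨up o, by rw [(hup o).card_eq, rho.2]⟩, (hup o).covers⟩) fun o o' h => hnewRow ?_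
  have hsame : up o = up o' := congrArg (fun mu => mu.1.1) h
  exact (hup o').row_unique (by rw [← hsame, (hup o).1])

lemma card_covers_pos (m : ℕ) (rho : DiagramOfSize m) :
    1 ≤ Fintype.card {mu : DiagramOfSize (m + 1) // Covers mu.1 rho} := by
  obtain ⟨mu, hmu⟩ := exists_coversAt_add (rho := rho) (i := 0) fun j hj => absurd hj j.not_lt_zero
  exact Fintype.card_pos_iff.2 ⟨⟨⟨mu, by rw [hmu.card_eq, rho.2]⟩, hmu.covers⟩⟩

/-! ### The row containing a given entry of the canonical tableau -/

section RowIndex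

variable {lam : YoungDiagram} {i x : ℕ}

lemma le_rowPartialSum_of_lt_card (h : rowPartialSum lam i < lam.card) :
    i ≤ rowPartialSum lam i := by
  have hpos : ∀ j < i, 1 ≤ lam.rowLen j := fun j hj => by
    by_contra! hzero
    refine h.ne (le_antisymm (rowPartialSum_le_card lam i) ?_)
    rw [← card_filter_fst_lt, YoungDiagram.card]
    refine Finset.card_le_card fun c hc => Finset.mem_filter.2 ⟨hc, ?_⟩
    have hc' := mem_cells_iff_lt_rowLen.1 hc
    by_contra! hic
    have := lam.rowLen_anti j c.1 (hj.le.trans hic)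
    omega
  simpa [rowPartialSum] using Finset.card_nsmul_le_sum (Finset.range i) lam.rowLen 1
    fun j hj => hpos j (Finset.mem_range.1 hj)

lemma le_rowIndex_iff (hx : x < lam.card) : i ≤ rowIndex lam x ↔ rowPartialSum lam i ≤ x := by
  constructor
  · intro h
    by_contra! hlt
    have hsub : {k ∈ Finset.range (x + 1) | rowPartialSum lam (k + 1) ≤ x} ⊆
        Finset.range (i - 1) := fun k hk => by
      have hk := (Finset.mem_filter.1 hk).2
      have : k + 1 < i := (rowPartialSum_mono lam).reflect_lt (hk.trans_lt hlt)
      exact Finset.mem_range.2 (by omega)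
    have hcard := (h.trans (Finset.card_le_card hsub)).trans_eq (Finset.card_range _)
    obtain rfl : i = 0 := by omega
    simp [rowPartialSum] at hlt
  · intro h
    have hi := le_rowPartialSum_of_lt_card (h.trans_lt hx)
    rw [← Finset.card_range i]
    refine Finset.card_le_card fun k hk => ?_
    have hk := Finset.mem_range.1 hk
    have := rowPartialSum_mono lam (Nat.succ_le_of_lt hk)
    exact Finset.mem_filter.2 ⟨Finset.mem_range.2 (by omega), this.trans h⟩

lemma rowIndex_eq_iff (hx : x < lam.card) :
    rowIndex lam x = i ↔ x ∈ Finset.Ico (rowPartialSum lam i) (rowPartialSum lam (i + 1)) := by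
  rw [Finset.mem_Ico, ← le_rowIndex_iff hx, ← not_le, ← le_rowIndex_iff hx]
  omega

lemma ncard_rowIndex_eq {n : ℕ} (hlam : lam.card = n) (i : ℕ) :
    {x : Fin n | rowIndex lam x = i}.ncard = lam.rowLen i := by
  subst hlam
  have himage : Fin.val '' {x : Fin lam.card | rowIndex lam x = i} =
      Finset.Ico (rowPartialSum lam i) (rowPartialSum lam (i + 1)) := by
    ext x
    constructor
    · rintro ⟨y, hy, rfl⟩
      exact (rowIndex_eq_iff y.2).1 hy
    · intro hx
      have hlt := (Finset.mem_Ico.1 hx).2.trans_le (rowPartialSum_le_card lam (i + 1))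
      exact ⟨⟨x, hlt⟩, (rowIndex_eq_iff hlt).2 hx, rfl⟩
  rw [← Set.ncard_image_of_injective _ Fin.val_injective, himage, Set.ncard_coe_finset,
    Nat.card_Ico, rowPartialSum_succ, Nat.add_sub_cancel_left]

end RowIndex

/-! ### Means over Young subgroups -/

section CycleMean

open Equiv Finset
open scoped BigOperators

lemma cycleType_permCongr {α β : Type*} [Fintype α] [DecidableEq α] [Fintype β] [DecidableEq β]
    (e : α ≃ β) (g : Perm α) : (e.permCongr g).cycleType = g.cycleType := by
  let f : α ≃ {_y : β // True} := e.trans (Equiv.subtypeUnivEquiv fun _ => trivial).symm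
  rw [← Perm.cycleType_extendDomain f]
  congr 1

lemma expect_ite_smul_eq {G α : Type*} [Group G] [Fintype G] [MulAction G α] [DecidableEq α]
    (a : α) (F : G → ℂ) :
    𝔼 g, (if g • a = a then F g else 0) =
      ((MulAction.orbit G a).ncard : ℂ)⁻¹ * 𝔼 g : MulAction.stabilizer G a, F g := by
  have hcard := (MulAction.stabilizer G a).card_mul_index
  rw [MulAction.index_stabilizer, Nat.card_eq_fintype_card, Nat.card_eq_fintype_card] at hcard
  have hsum : ∑ g with g • a = a, F g = ∑ g : MulAction.stabilizer G a, F g :=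
    sum_subtype _ (fun g => by simp) F
  rw [Fintype.expect_eq_sum_div_card, Fintype.expect_eq_sum_div_card, ← sum_filter, hsum, ← hcard,
    Nat.cast_mul, div_mul_eq_div_div, div_eq_inv_mul]

/-- The permutations preserving every colour class of the colouring `r`. -/
def youngSubgroup {α ι : Type*} (r : α → ι) : Subgroup (Perm α) where
  carrier := {g | ∀ x, r (g x) = r x}
  one_mem' _ := rfl
  mul_mem' {a b} ha hb x := (ha (b x)).trans (hb x)
  inv_mem' {a} ha x := by simpa using (ha (a⁻¹ x)).symm

lemma mem_youngSubgroup {α ι : Type*} {r : α → ι} {g : Perm α} :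
    g ∈ youngSubgroup r ↔ ∀ x, r (g x) = r x := Iff.rfl

lemma orbit_youngSubgroup {α ι : Type*} (r : α → ι) (j : α) :
    MulAction.orbit (youngSubgroup r) j = {x | r x = r j} := by
  ext x
  constructor
  · rintro ⟨g, rfl⟩
    exact g.2 j
  · intro hx
    refine ⟨⟨swap j x, fun y => ?_⟩, swap_apply_left j x⟩
    rw [swap_apply_def]
    split_ifs with hj hyx
    · rw [hj]; exact hx
    · rw [hyx]; exact hx.symm
    · rfl

variable {α β ι : Type*} [Fintype α] [DecidableEq α] [Fintype β] [DecidableEq β]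

/-- The mean over `H` of the class function `g ↦ c g.cycleType`. Mathlib's cycle type does not
record fixed points, so one function `c : Multiset ℕ → ℂ` is a class function on the symmetric
groups of all sizes at once, compatibly with restriction. -/
def cycleMean (H : Subgroup (Perm α)) : (Multiset ℕ → ℂ) →ₗ[ℂ] ℂ where
  toFun c := 𝔼 g : H, c g.1.cycleType
  map_add' _ _ := expect_add_distrib _ _ _
  map_smul' _ _ := (mul_expect _ _ _).symm

lemma cycleMean_apply (H : Subgroup (Perm α)) (c : Multiset ℕ → ℂ) :
    cycleMean H c = 𝔼 g : H, c g.1.cycleType := rfl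

lemma cycleMean_top (c : Multiset ℕ → ℂ) :
    cycleMean (⊤ : Subgroup (Perm α)) c = 𝔼 g : Perm α, c g.cycleType :=
  Fintype.expect_equiv Subgroup.topEquiv.toEquiv _ _ fun _ => rfl

lemma cycleMean_congr {H : Subgroup (Perm α)} {K : Subgroup (Perm β)} (e : α ≃ β)
    (he : ∀ g, g ∈ H ↔ e.permCongr g ∈ K) : cycleMean H = cycleMean K := by
  ext c
  exact Fintype.expect_equiv (e.permCongr.subtypeEquiv he) _ _ fun g => by
    rw [Equiv.subtypeEquiv_apply, cycleType_permCongr]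

lemma cycleMean_top_congr (h : Fintype.card α = Fintype.card β) :
    cycleMean (⊤ : Subgroup (Perm α)) = cycleMean (⊤ : Subgroup (Perm β)) :=
  cycleMean_congr (Fintype.equivOfCardEq h) fun _ => by simp

lemma cycleMean_youngSubgroup_congr {r : α → ι} {r' : β → ι} (s : Perm ι)
    (h : ∀ i, {x | r x = i}.ncard = {y | r' y = s i}.ncard) :
    cycleMean (youngSubgroup r) = cycleMean (youngSubgroup r') := by
  have hfiber (i : ι) : Nat.card {x // r x = i} = Nat.card {y // s.symm (r' y) = i} := by
    simp only [Equiv.symm_apply_eq]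
    exact h i
  let e : α ≃ β := Equiv.ofFiberEquiv (f := r) (g := fun y => s.symm (r' y))
    fun i => (Finite.card_eq.1 (hfiber i)).some
  have he (x : α) : r' (e x) = s (r x) :=
    s.symm_apply_eq.1 (Equiv.ofFiberEquiv_map (g := fun y => s.symm (r' y)) _ x)
  refine cycleMean_congr e fun g => ?_
  simp only [mem_youngSubgroup, e.surjective.forall, permCongr_apply, symm_apply_apply, he,
    s.injective.eq_iff]

/-- The class function on the permutations of `n` letters that is induced by the class function
`c` of the permutations of `n - 1` letters: its value is `c` times the number of fixed points. -/
def inducedClassFun (n : ℕ) (c : Multiset ℕ → ℂ) : Multiset ℕ → ℂ :=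
  fun s => (n - s.sum) * c s

lemma inducedClassFun_succ (n : ℕ) (c : Multiset ℕ → ℂ) :
    inducedClassFun (n + 1) c = c + inducedClassFun n c := by
  ext s
  simp only [inducedClassFun, Pi.add_apply, Nat.cast_add, Nat.cast_one]
  ring

lemma inducedClassFun_mul (n : ℕ) (c d : Multiset ℕ → ℂ) :
    inducedClassFun n (c * d) = inducedClassFun n c * d :=
  funext fun _ => (mul_assoc _ _ _).symm

lemma card_sub_sum_cycleType (g : Perm α) :
    (Fintype.card α - g.cycleType.sum : ℂ) = ∑ j, if g j = j then 1 else 0 := by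
  have hle := g.sum_cycleType_le
  rw [sum_boole, ← Nat.cast_sub hle, ← g.card_fixedPoints, Fintype.card_subtype]
  rfl

lemma expect_stabilizer_youngSubgroup (r : α → ι) (j : α) (c : Multiset ℕ → ℂ) :
    𝔼 g : MulAction.stabilizer (youngSubgroup r) j, c g.1.1.cycleType =
      cycleMean (youngSubgroup fun x : {x // x ≠ j} => r x) c := by
  have hmem (g : Perm {x // x ≠ j}) (hg : g ∈ youngSubgroup fun x : {x // x ≠ j} => r x) :
      Perm.ofSubtype g ∈ youngSubgroup r := fun x => by
    rcases eq_or_ne x j with rfl | hx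
    · rw [Perm.ofSubtype_apply_of_not_mem g (by simp)]
    · rw [Perm.ofSubtype_apply_of_mem g hx]
      exact hg ⟨x, hx⟩
  let extend (g : youngSubgroup fun x : {x // x ≠ j} => r x) :
      MulAction.stabilizer (youngSubgroup r) j :=
    ⟨⟨Perm.ofSubtype g.1, hmem g.1 g.2⟩, Perm.ofSubtype_apply_of_not_mem g.1 (by simp)⟩
  have hinj : Function.Injective extend := fun g h hgh =>
    Subtype.ext (Perm.ofSubtype_injective (congrArg (fun k => k.1.1) hgh))
  have hsurj : Function.Surjective extend := fun g => by
    have hfix : g.1.1 j = j := g.2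
    have hne (x : α) : g.1.1 x ≠ j ↔ x ≠ j := by
      rw [ne_eq, ne_eq, ← g.1.1.injective.eq_iff (a := x), hfix]
    refine ⟨⟨g.1.1.subtypePerm hne, fun x => g.1.2 x⟩, Subtype.ext (Subtype.ext ?_)⟩
    refine Perm.ofSubtype_subtypePerm hne fun x hx hxj => hx ?_
    rw [hxj, hfix]
  refine (Fintype.expect_bijective extend ⟨hinj, hsurj⟩ _ _ fun g => ?_).symm
  rw [Perm.cycleType_ofSubtype]

lemma cycleMean_inducedClassFun (r : α → ι) (c : Multiset ℕ → ℂ) :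
    cycleMean (youngSubgroup r) (inducedClassFun (Fintype.card α) c) =
      ∑ j, ({x | r x = r j}.ncard : ℂ)⁻¹ *
        cycleMean (youngSubgroup fun x : {x // x ≠ j} => r x) c := by
  simp only [cycleMean_apply, inducedClassFun, card_sub_sum_cycleType, sum_mul, ite_mul, one_mul,
    zero_mul, expect_sum_comm]
  refine sum_congr rfl fun j _ => ?_
  rw [← orbit_youngSubgroup, ← cycleMean_apply, ← expect_stabilizer_youngSubgroup]
  exact expect_ite_smul_eq j fun g : youngSubgroup r => c g.1.cycleType

lemma cycleMean_top_inducedClassFun (m : ℕ) (c : Multiset ℕ → ℂ) :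
    cycleMean (⊤ : Subgroup (Perm (Fin (m + 1)))) (inducedClassFun (m + 1) c) =
      cycleMean (⊤ : Subgroup (Perm (Fin m))) c := by
  have htop (γ : Type) : (⊤ : Subgroup (Perm γ)) = youngSubgroup fun _ => () :=
    (eq_top_iff.2 fun _ _ _ => rfl).symm
  have hfin := cycleMean_inducedClassFun (fun _ : Fin (m + 1) => ()) c
  rw [Fintype.card_fin] at hfin
  have hremove (j : Fin (m + 1)) :
      cycleMean (⊤ : Subgroup (Perm {x // x ≠ j})) = cycleMean (⊤ : Subgroup (Perm (Fin m))) :=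
    cycleMean_top_congr (by simp)
  simp only [← htop, hremove, Set.ofPred_true, Set.ncard_univ, Nat.card_eq_fintype_card,
    Fintype.card_fin, sum_const, card_univ, nsmul_eq_mul] at hfin
  rw [hfin, mul_inv_cancel_left₀ (Nat.cast_ne_zero.2 m.succ_ne_zero)]

lemma expect_indTrivChar_mul {G : Type*} [Group G] [Fintype G] (H : Subgroup G) {f : G → ℂ}
    (hf : ∀ x g, f (x * g * x⁻¹) = f g) :
    𝔼 g, indTrivChar H g * f g = 𝔼 h : H, f h := by
  have hconj (x : G) : ∑ g, (if x⁻¹ * g * x ∈ H then f g else 0) = ∑ h : H, f h := by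
    have hcancel (g : G) : x⁻¹ * (x * g * x⁻¹) * x = g := by group
    rw [← Equiv.sum_comp (MulAut.conj x).toEquiv]
    simp only [MulEquiv.toEquiv_eq_coe, EquivLike.coe_coe, MulAut.conj_apply, hcancel, hf]
    rw [← sum_filter]
    exact sum_subtype _ (by simp) f
  have hterm (g : G) : indTrivChar H g * f g =
      (Nat.card H : ℂ)⁻¹ * ∑ x, if x⁻¹ * g * x ∈ H then f g else 0 := by
    have hcard := Nat.subtype_card (p := fun x => x⁻¹ * g * x ∈ H) {x | x⁻¹ * g * x ∈ H} (by simp)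
    rw [indTrivChar, hcard, mul_assoc, ← sum_filter, sum_const, nsmul_eq_mul]
  have hG : (Fintype.card G : ℂ) ≠ 0 := Nat.cast_ne_zero.2 Fintype.card_ne_zero
  rw [Fintype.expect_eq_sum_div_card, Fintype.expect_eq_sum_div_card,
    ← Nat.card_eq_fintype_card (α := H)]
  simp only [hterm, ← mul_sum]
  rw [sum_comm]
  simp only [hconj, sum_const, card_univ, nsmul_eq_mul]
  field_simp

end CycleMean

/-! ### Specht polynomials -/

section SpechtPoly

open Equiv Finset

section XSubX

variable {σ R : Type*} [CommRing R]

lemma totalDegree_X_sub_X [Nontrivial R] {i j : σ} (h : i ≠ j) :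
    (X i - X j : MvPolynomial σ R).totalDegree = 1 :=
  ((isHomogeneous_X R i).sub (isHomogeneous_X R j)).totalDegree
    (sub_ne_zero.2 fun e => h (X_injective e))

lemma prime_X_sub_X [IsDomain R] [UniqueFactorizationMonoid R] {i j : σ}
    (h : i ≠ j) : Prime (X i - X j : MvPolynomial σ R) := by
  refine (irreducible_of_totalDegree_eq_one (totalDegree_X_sub_X h) fun x hx => ?_).prime
  have hcoeff := hx (Finsupp.single i 1)
  rw [coeff_sub, coeff_X, coeff_X, if_pos rfl,
    if_neg fun e => h ((Finsupp.single_left_inj one_ne_zero).1 e).symm, sub_zero] at hcoeff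
  exact isUnit_of_dvd_one hcoeff

lemma eq_or_eq_of_X_sub_X_dvd [Nontrivial R] {a b c d : σ} (hcd : c ≠ d)
    (h : (X a - X b : MvPolynomial σ R) ∣ X c - X d) : (c = a ∧ d = b) ∨ (c = b ∧ d = a) := by
  let f : σ → σ := fun k => if k = b then a else k
  have hdvd := map_dvd (rename (R := R) f) h
  simp only [map_sub, rename_X] at hdvd
  have hf : f a = f b := by simp [f]
  rw [hf, sub_self, zero_dvd_iff, sub_eq_zero] at hdvd
  have hcd' : f c = f d := X_injective hdvd
  simp only [f] at hcd'
  split_ifs at hcd' <;> simp_all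

lemma X_sub_X_dvd_sub_rename [DecidableEq σ] (i j : σ) (q : MvPolynomial σ R) :
    (X i - X j) ∣ rename (fun k => if k = j then i else k) q - q := by
  induction q using MvPolynomial.induction_on with
  | C a => simp
  | add p q hp hq =>
    rw [map_add, add_sub_add_comm]
    exact dvd_add hp hq
  | mul_X p k hp =>
    have hk : (X i - X j : MvPolynomial σ R) ∣ X (if k = j then i else k) - X k := by
      split_ifs with hkj
      · rw [hkj]
      · rw [sub_self]
        exact dvd_zero _
    rw [map_mul, rename_X]
    convert dvd_add (hp.mul_right (X (if k = j then i else k))) (hk.mul_left p) using 1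
    ring

lemma X_sub_X_dvd_of_rename_swap_eq_neg [NoZeroDivisors R] [CharZero R] [DecidableEq σ]
    {i j : σ} {q : MvPolynomial σ R} (hq : rename (swap i j) q = -q) : (X i - X j) ∣ q := by
  have hidem : rename (fun k => if k = j then i else k) (rename (swap i j) q) =
      rename (fun k => if k = j then i else k) q := by
    rw [rename_rename]
    congr 2
    ext k
    simp only [Function.comp, swap_apply_def]
    split_ifs <;> simp_all
  rw [hq, map_neg] at hidem
  have hdvd := X_sub_X_dvd_sub_rename i j q
  rwa [self_eq_neg.1 hidem.symm, zero_sub, dvd_neg] at hdvd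

end XSubX

/-- The pairs of cells in a common column, the first strictly above the second: they index the
factors of a Specht polynomial. -/
def columnPairs (mu : YoungDiagram) : Finset (mu.cells × mu.cells) :=
  {p | p.1.1.2 = p.2.1.2 ∧ p.1.1.1 < p.2.1.1}

lemma mem_columnPairs {mu : YoungDiagram} {p : mu.cells × mu.cells} :
    p ∈ columnPairs mu ↔ p.1.1.2 = p.2.1.2 ∧ p.1.1.1 < p.2.1.1 := by
  simp [columnPairs]

lemma fst_ne_snd_of_mem_columnPairs {mu : YoungDiagram} {p : mu.cells × mu.cells}
    (hp : p ∈ columnPairs mu) : p.1 ≠ p.2 := fun h =>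
  (mem_columnPairs.1 hp).2.ne (congrArg (fun c => c.1.1) h)

variable {n : ℕ} {mu nu : YoungDiagram}

lemma spechtPoly_eq_prod (T : mu.cells ≃ Fin n) :
    spechtPoly n mu T = ∏ p ∈ columnPairs mu, (X (T p.1) - X (T p.2)) := rfl

lemma isHomogeneous_spechtPoly (T : mu.cells ≃ Fin n) :
    (spechtPoly n mu T).IsHomogeneous (columnPairs mu).card := by
  rw [spechtPoly_eq_prod, card_eq_sum_ones]
  exact IsHomogeneous.prod _ _ _ fun p _ => (isHomogeneous_X ℂ _).sub (isHomogeneous_X ℂ _)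

lemma prime_X_sub_X_of_mem_columnPairs (T : mu.cells ≃ Fin n) {p : mu.cells × mu.cells}
    (hp : p ∈ columnPairs mu) : Prime (X (T p.1) - X (T p.2) : MvPolynomial (Fin n) ℂ) :=
  prime_X_sub_X (T.injective.ne (fst_ne_snd_of_mem_columnPairs hp))

lemma spechtPoly_ne_zero (T : mu.cells ≃ Fin n) : spechtPoly n mu T ≠ 0 :=
  prod_ne_zero_iff.2 fun _ hp => (prime_X_sub_X_of_mem_columnPairs T hp).ne_zero

lemma not_X_sub_X_dvd_of_mem_columnPairs (T : mu.cells ≃ Fin n) {p q : mu.cells × mu.cells}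
    (hp : p ∈ columnPairs mu) (hq : q ∈ columnPairs mu) (hpq : p ≠ q) :
    ¬ (X (T p.1) - X (T p.2) : MvPolynomial (Fin n) ℂ) ∣ X (T q.1) - X (T q.2) := by
  intro h
  rcases eq_or_eq_of_X_sub_X_dvd (T.injective.ne (fst_ne_snd_of_mem_columnPairs hq)) h with
    ⟨hfst, hsnd⟩ | ⟨hfst, hsnd⟩
  · exact hpq (Prod.ext (T.injective hfst).symm (T.injective hsnd).symm)
  · have hlt := (mem_columnPairs.1 hq).2
    rw [T.injective hfst, T.injective hsnd] at hlt
    exact hlt.not_gt (mem_columnPairs.1 hp).2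

lemma prod_offDiag_eq_spechtPoly_sq (T : mu.cells ≃ Fin n) :
    ∏ p : mu.cells × mu.cells with p.1.1.2 = p.2.1.2 ∧ p.1 ≠ p.2, (X (T p.1) - X (T p.2)) =
      (-1) ^ (columnPairs mu).card * spechtPoly n mu T ^ 2 := by
  have hsplit : ({p | p.1.1.2 = p.2.1.2 ∧ p.1 ≠ p.2} : Finset (mu.cells × mu.cells)) =
      columnPairs mu ∪ (columnPairs mu).map (Equiv.prodComm _ _).toEmbedding := by
    ext ⟨⟨⟨i, j⟩, hc⟩, ⟨⟨i', j'⟩, hd⟩⟩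
    simp [mem_columnPairs]
    omega
  have hdisj : Disjoint (columnPairs mu)
      ((columnPairs mu).map (Equiv.prodComm _ _).toEmbedding) := by
    refine disjoint_left.2 fun p hp hp' => ?_
    rw [mem_map_equiv, mem_columnPairs] at hp'
    exact hp'.2.not_gt (mem_columnPairs.1 hp).2
  have hswap : ∏ p ∈ columnPairs mu, (X (T p.2) - X (T p.1) : MvPolynomial (Fin n) ℂ) =
      (-1) ^ (columnPairs mu).card * spechtPoly n mu T := by
    rw [spechtPoly_eq_prod, ← prod_const, ← prod_mul_distrib]
    exact prod_congr rfl fun p _ => by ring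
  rw [hsplit, prod_union hdisj, prod_map]
  simp only [Equiv.coe_toEmbedding, Equiv.prodComm_apply, Prod.fst_swap, Prod.snd_swap]
  rw [hswap, ← spechtPoly_eq_prod]
  ring

lemma rename_swap_spechtPoly_sq (T : mu.cells ≃ Fin n) {c d : mu.cells} (h : c.1.2 = d.1.2) :
    rename (swap (T c) (T d)) (spechtPoly n mu T) ^ 2 = spechtPoly n mu T ^ 2 := by
  have hcol (x : mu.cells) : (swap c d x).1.2 = x.1.2 := by
    rw [swap_apply_def]
    split_ifs with hc hd
    · rw [hc, h]
    · rw [hd, h]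
    · rfl
  have hT : T.trans (swap (T c) (T d)) = (swap c d).trans T := by
    ext x
    simp only [trans_apply, swap_apply_def, T.injective.eq_iff, apply_ite T]
  rw [rename_spechtPoly, hT]
  refine mul_left_cancel₀ (pow_ne_zero (columnPairs mu).card (neg_ne_zero.2 one_ne_zero)) ?_
  rw [← prod_offDiag_eq_spechtPoly_sq, ← prod_offDiag_eq_spechtPoly_sq]
  exact prod_equiv ((swap c d).prodCongr (swap c d)) (fun q => by simp [hcol]) fun q _ => rfl

lemma rename_swap_spechtPoly (T : mu.cells ≃ Fin n) {p : mu.cells × mu.cells}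
    (hp : p ∈ columnPairs mu) :
    rename (swap (T p.1) (T p.2)) (spechtPoly n mu T) = -spechtPoly n mu T := by
  refine (sq_eq_sq_iff_eq_or_eq_neg.1
    (rename_swap_spechtPoly_sq T (mem_columnPairs.1 hp).1)).resolve_left fun h => ?_
  have hprime := prime_X_sub_X_of_mem_columnPairs T hp
  rw [spechtPoly_eq_prod, ← mul_prod_erase _ _ hp, map_mul, map_sub, rename_X, rename_X,
    swap_apply_left, swap_apply_right, ← neg_sub, neg_mul, ← mul_neg] at h
  have hdvd := X_sub_X_dvd_of_rename_swap_eq_neg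
    (neg_eq_iff_eq_neg.1 (mul_left_cancel₀ hprime.ne_zero h))
  obtain ⟨q, hq, hpq⟩ := (hprime.dvd_finsetProd_iff _).1 hdvd
  exact not_X_sub_X_dvd_of_mem_columnPairs T hp (mem_of_mem_erase hq) (ne_of_mem_erase hq).symm hpq

lemma spechtPoly_dvd_of_rename_swap_eq_neg (T : mu.cells ≃ Fin n) {q : MvPolynomial (Fin n) ℂ}
    (hq : ∀ p ∈ columnPairs mu, rename (swap (T p.1) (T p.2)) q = -q) :
    spechtPoly n mu T ∣ q := by
  rw [spechtPoly_eq_prod]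
  refine prod_dvd_of_isRelPrime (fun p hp p' hp' hpp' => ?_) fun p hp =>
    X_sub_X_dvd_of_rename_swap_eq_neg (hq p hp)
  exact (prime_X_sub_X_of_mem_columnPairs T hp).irreducible.isRelPrime_iff_not_dvd.2
    (not_X_sub_X_dvd_of_mem_columnPairs T hp hp' hpp')

lemma isHomogeneous_of_mem_spechtModule {q : MvPolynomial (Fin n) ℂ} (hq : q ∈ spechtModule n mu) :
    q.IsHomogeneous (columnPairs mu).card := by
  suffices h : spechtModule n mu ≤ homogeneousSubmodule (Fin n) ℂ (columnPairs mu).card from h hq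
  refine Submodule.span_le.2 ?_
  rintro _ ⟨T, rfl⟩
  exact isHomogeneous_spechtPoly T

end SpechtPoly

/-! ### Dominance -/

section Dominance

open Finset

lemma card_filter_snd_eq_and_label_lt_le (nu : YoungDiagram) (label : nu.cells → ℕ)
    (hlabel : ∀ p ∈ columnPairs nu, label p.1 ≠ label p.2) (j k : ℕ) :
    #{c : nu.cells | c.1.2 = j ∧ label c < k} ≤ min k (nu.colLen j) := by
  have hinj : Set.InjOn label {c : nu.cells | c.1.2 = j} := fun c hc d hd hcd => by
    rw [Set.mem_ofPred_eq] at hc hd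
    rcases lt_trichotomy c.1.1 d.1.1 with h | h | h
    · exact absurd hcd (hlabel (c, d) (mem_columnPairs.2 ⟨hc.trans hd.symm, h⟩))
    · exact Subtype.ext (Prod.ext h (hc.trans hd.symm))
    · exact absurd hcd.symm (hlabel (d, c) (mem_columnPairs.2 ⟨hd.trans hc.symm, h⟩))
  refine le_min ?_ ?_
  · rw [← card_range k]
    refine card_le_card_of_injOn label (fun c hc => ?_) (hinj.mono fun c hc => ?_)
    · simpa using (mem_filter.1 hc).2.2
    · exact (mem_filter.1 hc).2.1
  · rw [YoungDiagram.colLen_eq_card]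
    refine card_le_card_of_injOn Subtype.val (fun c hc => ?_) Subtype.val_injective.injOn
    exact YoungDiagram.mem_col_iff.2 ⟨c.2, (mem_filter.1 hc).2.1⟩

-- Compare column by column: distinct labels below `k` occupy at most `k` cells of a column, as do
-- its topmost `k` cells.
lemma card_filter_label_lt_le (nu : YoungDiagram) (label : nu.cells → ℕ)
    (hlabel : ∀ p ∈ columnPairs nu, label p.1 ≠ label p.2) (k : ℕ) :
    #{c | label c < k} ≤ rowPartialSum nu k := by
  have hcol (c : nu.cells) : c.1.2 ∈ nu.cells.image Prod.snd := mem_image_of_mem _ c.2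
  rw [← card_filter_fst_lt, card_eq_sum_card_fiberwise (f := fun c : nu.cells => c.1.2)
    (t := nu.cells.image Prod.snd) fun c _ => hcol c,
    card_eq_sum_card_fiberwise (f := Prod.snd) (t := nu.cells.image Prod.snd)
    fun c hc => mem_image_of_mem _ (mem_filter.1 hc).1]
  refine sum_le_sum fun j _ => ?_
  rw [filter_filter]
  simp only [and_comm (b := _ = j)]
  refine (card_filter_snd_eq_and_label_lt_le nu label hlabel j k).trans ?_
  rw [← card_range (min k _)]
  refine card_le_card_of_injOn (fun i => (i, j)) (fun i hi => ?_) fun _ _ _ _ h =>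
    congrArg Prod.fst h
  obtain ⟨hik, hij⟩ := lt_min_iff.1 (mem_range.1 hi)
  simpa [YoungDiagram.mem_iff_lt_colLen] using ⟨hij, hik⟩

-- Evaluating every variable at the row index of its cell in `T` separates the columns of `T`,
-- so some Specht polynomial of shape `nu` does not vanish at this point.
lemma rowPartialSum_le_of_spechtPoly_mem {n : ℕ} {mu nu : YoungDiagram} (T : mu.cells ≃ Fin n)
    (h : spechtPoly n mu T ∈ spechtModule n nu) (k : ℕ) :
    rowPartialSum mu k ≤ rowPartialSum nu k := by
  let row : Fin n → ℕ := fun a => (T.symm a).1.1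
  let x : Fin n → ℂ := fun a => row a
  have hmu : aeval x (spechtPoly n mu T) ≠ 0 := by
    rw [spechtPoly_eq_prod, map_prod, prod_ne_zero_iff]
    intro p hp
    have hlt := (mem_columnPairs.1 hp).2
    simpa [x, row, sub_eq_zero] using hlt.ne
  obtain ⟨T', hT'⟩ : ∃ T' : nu.cells ≃ Fin n, aeval x (spechtPoly n nu T') ≠ 0 := by
    by_contra! hzero
    have hle : spechtModule n nu ≤ LinearMap.ker (aeval (R := ℂ) x).toLinearMap := by
      refine Submodule.span_le.2 ?_
      rintro _ ⟨T', rfl⟩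
      exact hzero T'
    exact hmu (hle h)
  rw [spechtPoly_eq_prod, map_prod, prod_ne_zero_iff] at hT'
  have hlabel : ∀ p ∈ columnPairs nu, row (T' p.1) ≠ row (T' p.2) := fun p hp heq =>
    hT' p hp (by simp [x, heq])
  refine le_trans (le_of_eq ?_) (card_filter_label_lt_le nu (fun c => row (T' c)) hlabel k)
  rw [← card_filter_fst_lt, card_filter, card_filter, ← sum_coe_sort]
  exact Fintype.sum_equiv (T.trans T'.symm) _ _ fun c => by simp [row]

end Dominance

/-! ### Irreducible characters -/

section SpechtRep

open Equiv Finset Representation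

/-- The Specht module as a representation, the permutations acting by permuting the variables. -/
def spechtRep (n : ℕ) (mu : YoungDiagram) :
    Representation ℂ (Perm (Fin n)) (spechtModule n mu) where
  toFun g := (rename g).toLinearMap.restrict (spechtModule_invariant n mu g)
  map_one' := LinearMap.ext fun x => Subtype.ext (by simp)
  map_mul' g h := LinearMap.ext fun x => Subtype.ext (by simp [rename_rename])

variable {n : ℕ} {mu nu : YoungDiagram}

lemma coe_spechtRep_apply (g : Perm (Fin n)) (x : spechtModule n mu) :
    (spechtRep n mu g x : MvPolynomial (Fin n) ℂ) = rename g x.1 := rfl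

lemma spechtChar_eq_character (g : Perm (Fin n)) :
    spechtChar n mu g = (spechtRep n mu).character g := rfl

instance finiteDimensional_spechtModule : FiniteDimensional ℂ (spechtModule n mu) :=
  FiniteDimensional.span_of_finite ℂ (Set.finite_range _)

/-- The Specht polynomial of the tableau `T` as a vector of the Specht module. -/
def spechtVec (T : mu.cells ≃ Fin n) : spechtModule n mu :=
  ⟨spechtPoly n mu T, Submodule.subset_span ⟨T, rfl⟩⟩

lemma spechtVec_ne_zero (T : mu.cells ≃ Fin n) : spechtVec T ≠ 0 := fun h =>
  spechtPoly_ne_zero T (congrArg Subtype.val h)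

lemma spechtRep_spechtVec (g : Perm (Fin n)) (T : mu.cells ≃ Fin n) :
    spechtRep n mu g (spechtVec T) = spechtVec (T.trans g) :=
  Subtype.ext (rename_spechtPoly n mu T g)

lemma span_range_spechtVec (n : ℕ) (mu : YoungDiagram) :
    Submodule.span ℂ (Set.range (spechtVec (n := n) (mu := mu))) = ⊤ := by
  refine Submodule.map_injective_of_injective (spechtModule n mu).injective_subtype ?_
  rw [Submodule.map_span, ← Set.range_comp, Submodule.map_top, Submodule.range_subtype]
  rfl

lemma intertwiningMap_ext_spechtVec {W : Type*} [AddCommGroup W] [Module ℂ W]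
    {s : Representation ℂ (Perm (Fin n)) W} {f g : IntertwiningMap (spechtRep n mu) s}
    (h : ∀ T, f (spechtVec T) = g (spechtVec T)) : f = g :=
  IntertwiningMap.ext (LinearMap.ext_on_range (span_range_spechtVec n mu) h)

lemma spechtPoly_dvd_intertwiningMap (f : IntertwiningMap (spechtRep n mu) (spechtRep n nu))
    (T : mu.cells ≃ Fin n) : spechtPoly n mu T ∣ f (spechtVec T) := by
  refine spechtPoly_dvd_of_rename_swap_eq_neg T fun p hp => ?_
  have hneg : spechtRep n mu (swap (T p.1) (T p.2)) (spechtVec T) = -spechtVec T :=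
    Subtype.ext (rename_swap_spechtPoly T hp)
  rw [← coe_spechtRep_apply, ← IntertwiningMap.isIntertwining, hneg, map_neg]
  rfl

lemma card_columnPairs_le_of_ne_zero {f : IntertwiningMap (spechtRep n mu) (spechtRep n nu)}
    (hf : f ≠ 0) : #(columnPairs mu) ≤ #(columnPairs nu) := by
  obtain ⟨T, hT⟩ : ∃ T, f (spechtVec T) ≠ 0 := by
    by_contra! h
    exact hf (intertwiningMap_ext_spechtVec h)
  have hT : (f (spechtVec T)).1 ≠ 0 := fun h => hT (Subtype.ext h)
  have hdeg := totalDegree_le_of_dvd_of_isDomain (spechtPoly_dvd_intertwiningMap f T) hT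
  rwa [(isHomogeneous_spechtPoly T).totalDegree (spechtPoly_ne_zero T),
    (isHomogeneous_of_mem_spechtModule (f (spechtVec T)).2).totalDegree hT] at hdeg

lemma exists_intertwiningMap_spechtVec_eq_smul (hcard : #(columnPairs nu) ≤ #(columnPairs mu))
    (f : IntertwiningMap (spechtRep n mu) (spechtRep n nu)) (T : mu.cells ≃ Fin n) :
    ∃ c : ℂ, (f (spechtVec T)).1 = c • spechtPoly n mu T := by
  obtain ⟨r, hr⟩ := spechtPoly_dvd_intertwiningMap f T
  rcases eq_or_ne r 0 with rfl | hr0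
  · exact ⟨0, by rw [hr, mul_zero, zero_smul]⟩
  have hdeg := totalDegree_mul_of_isDomain (spechtPoly_ne_zero T) hr0
  have hne : (f (spechtVec T)).1 ≠ 0 := hr ▸ mul_ne_zero (spechtPoly_ne_zero T) hr0
  rw [← hr, (isHomogeneous_spechtPoly T).totalDegree (spechtPoly_ne_zero T),
    (isHomogeneous_of_mem_spechtModule (f (spechtVec T)).2).totalDegree hne] at hdeg
  have hconst : r = C (coeff 0 r) := totalDegree_eq_zero_iff_eq_C.1 (by omega)
  exact ⟨coeff 0 r, by rw [hr, smul_eq_C_mul, mul_comm, ← hconst]⟩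

lemma rowPartialSum_le_of_intertwiningMap_ne_zero (hcard : #(columnPairs nu) ≤ #(columnPairs mu))
    {f : IntertwiningMap (spechtRep n mu) (spechtRep n nu)} (hf : f ≠ 0) (k : ℕ) :
    rowPartialSum mu k ≤ rowPartialSum nu k := by
  obtain ⟨T, hT⟩ : ∃ T, f (spechtVec T) ≠ 0 := by
    by_contra! h
    exact hf (intertwiningMap_ext_spechtVec h)
  obtain ⟨c, hc⟩ := exists_intertwiningMap_spechtVec_eq_smul hcard f T
  have hc0 : c ≠ 0 := by
    rintro rfl
    exact hT (Subtype.ext (hc.trans (zero_smul _ _)))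
  exact rowPartialSum_le_of_spechtPoly_mem T
    ((Submodule.smul_mem_iff _ hc0).1 (hc ▸ (f (spechtVec T)).2)) k

lemma eq_of_intertwiningMap_ne_zero {f : IntertwiningMap (spechtRep n mu) (spechtRep n nu)}
    {g : IntertwiningMap (spechtRep n nu) (spechtRep n mu)} (hf : f ≠ 0) (hg : g ≠ 0) :
    mu = nu :=
  have hmu := card_columnPairs_le_of_ne_zero hf
  have hnu := card_columnPairs_le_of_ne_zero hg
  eq_of_rowPartialSum_eq fun k => le_antisymm
    (rowPartialSum_le_of_intertwiningMap_ne_zero hnu hf k)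
    (rowPartialSum_le_of_intertwiningMap_ne_zero hmu hg k)

lemma finrank_intertwiningMap_spechtRep_self (hmu : mu.card = n) :
    Module.finrank ℂ (IntertwiningMap (spechtRep n mu) (spechtRep n mu)) = 1 := by
  have T₀ : mu.cells ≃ Fin n := Fintype.equivFinOfCardEq ((Fintype.card_coe _).trans hmu)
  refine finrank_eq_one (IntertwiningMap.id (spechtRep n mu))
    (fun h => spechtVec_ne_zero T₀ ?_) fun f => ?_
  · exact congrArg (fun f : IntertwiningMap _ _ => f (spechtVec T₀)) h
  obtain ⟨c, hc⟩ := exists_intertwiningMap_spechtVec_eq_smul le_rfl f T₀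
  refine ⟨c, intertwiningMap_ext_spechtVec fun T => ?_⟩
  have hT : spechtVec T = spechtRep n mu (T₀.symm.trans T) (spechtVec T₀) := by
    rw [spechtRep_spechtVec, ← trans_assoc, self_trans_symm, refl_trans]
  rw [hT, IntertwiningMap.isIntertwining, IntertwiningMap.isIntertwining]
  exact congrArg _ (Subtype.ext hc.symm)

end SpechtRep

section SpechtClassFun

open Equiv Finset Representation
open scoped BigOperators

lemma character_eq_of_cycleType_eq {α V : Type*} [Fintype α] [DecidableEq α] [AddCommGroup V]
    [Module ℂ V] (r : Representation ℂ (Perm α) V) {g h : Perm α}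
    (hgh : g.cycleType = h.cycleType) : r.character g = r.character h := by
  obtain ⟨c, rfl⟩ := isConj_iff.1 (Perm.isConj_of_cycleType_eq hgh)
  rw [char_conj]

lemma expect_character_mul_character {α V W : Type*} [Fintype α] [DecidableEq α]
    [AddCommGroup V] [Module ℂ V] [FiniteDimensional ℂ V]
    [AddCommGroup W] [Module ℂ W] [FiniteDimensional ℂ W]
    (r : Representation ℂ (Perm α) V) (s : Representation ℂ (Perm α) W) :
    𝔼 g, s.character g * r.character g = Module.finrank ℂ (IntertwiningMap r s) := by
  have : Invertible (Nat.card (Perm α) : ℂ) :=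
    invertibleOfNonzero (Nat.cast_ne_zero.2 Nat.card_pos.ne')
  rw [← card_inv_mul_sum_char_mul_char_eq_finrank, Fintype.expect_eq_sum_div_card, div_eq_inv_mul,
    Nat.card_eq_fintype_card]
  simp only [character_eq_of_cycleType_eq r (Perm.cycleType_inv _)]

lemma finrank_intertwiningMap_comm {α V W : Type*} [Finite α]
    [AddCommGroup V] [Module ℂ V] [FiniteDimensional ℂ V]
    [AddCommGroup W] [Module ℂ W] [FiniteDimensional ℂ W]
    (r : Representation ℂ (Perm α) V) (s : Representation ℂ (Perm α) W) :
    Module.finrank ℂ (IntertwiningMap r s) = Module.finrank ℂ (IntertwiningMap s r) := by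
  have := Fintype.ofFinite α
  have h := expect_character_mul_character s r
  simp only [mul_comm (r.character _)] at h
  exact_mod_cast (expect_character_mul_character r s).symm.trans h

/-- The character of the Specht module as a function of the cycle type, extended by zero to the
multisets that are not cycle types of permutations of `n` letters. -/
def spechtClassFun (n : ℕ) (mu : YoungDiagram) : Multiset ℕ → ℂ :=
  Function.extend (Perm.cycleType (α := Fin n)) (spechtChar n mu) 0

lemma spechtClassFun_cycleType {n : ℕ} {mu : YoungDiagram} (g : Perm (Fin n)) :
    spechtClassFun n mu g.cycleType = spechtChar n mu g :=
  Function.FactorsThrough.extend_apply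
    (fun _ _ h => character_eq_of_cycleType_eq (spechtRep n mu) h) _ g

lemma cycleMean_top_spechtClassFun_mul {n : ℕ} (mu nu : DiagramOfSize n) :
    cycleMean (⊤ : Subgroup (Perm (Fin n))) (spechtClassFun n mu * spechtClassFun n nu) =
      if mu = nu then 1 else 0 := by
  simp only [cycleMean_top, Pi.mul_apply, spechtClassFun_cycleType, spechtChar_eq_character,
    expect_character_mul_character]
  split_ifs with h
  · rw [h, finrank_intertwiningMap_spechtRep_self nu.2, Nat.cast_one]
  · rw [Nat.cast_eq_zero]
    by_contra hne
    have hne' := finrank_intertwiningMap_comm (spechtRep n nu) (spechtRep n mu) ▸ hne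
    have := Module.nontrivial_of_finrank_pos (Nat.pos_of_ne_zero hne)
    have := Module.nontrivial_of_finrank_pos (Nat.pos_of_ne_zero hne')
    obtain ⟨f, hf⟩ := exists_ne (0 : IntertwiningMap (spechtRep n mu) (spechtRep n nu))
    obtain ⟨g, hg⟩ := exists_ne (0 : IntertwiningMap (spechtRep n nu) (spechtRep n mu))
    exact h (Subtype.ext (eq_of_intertwiningMap_ne_zero hf hg))

lemma eq_sum_of_orthonormal {K V ι : Type*} [Field K] [AddCommGroup V] [Module K V]
    [FiniteDimensional K V] [Fintype ι] [DecidableEq ι] (B : LinearMap.BilinForm K V) {v : ι → V}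
    (hv : ∀ i j, B (v i) (v j) = if i = j then 1 else 0)
    (hcard : Module.finrank K V ≤ Fintype.card ι) (x : V) : x = ∑ i, B x (v i) • v i := by
  have hcoeff (a : ι → K) (j : ι) : B (∑ i, a i • v i) (v j) = a j := by
    simp [hv]
  have hli : LinearIndependent K v := Fintype.linearIndependent_iff.2 fun a ha j => by
    rw [← hcoeff a j, ha, map_zero, LinearMap.zero_apply]
  have hspan := hli.span_eq_top_of_card_eq_finrank' (hli.fintype_card_le_finrank.antisymm hcard)
  obtain ⟨a, rfl⟩ :=
    (Submodule.mem_span_range_iff_exists_fun K).1 (hspan ▸ Submodule.mem_top (x := x))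
  simp only [hcoeff]

/-- The restriction of a class function to the partitions of `n`, that is, to the conjugacy
classes of the permutations of `n` letters. -/
def onPartition (n : ℕ) (c : Multiset ℕ → ℂ) (p : (Fintype.card (Fin n)).Partition) : ℂ :=
  c (p.parts.filter (2 ≤ ·))

lemma onPartition_partition {n : ℕ} (c : Multiset ℕ → ℂ) (g : Perm (Fin n)) :
    onPartition n c g.partition = c g.cycleType := by
  rw [onPartition, Perm.filter_parts_partition_eq_cycleType]

/-- The bilinear form `⟨u, v⟩ = 𝔼 g, u g * v g` on the class functions on `Perm (Fin n)`. -/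
def classForm (n : ℕ) : LinearMap.BilinForm ℂ ((Fintype.card (Fin n)).Partition → ℂ) :=
  LinearMap.mk₂ ℂ (fun u v => 𝔼 g : Perm (Fin n), u g.partition * v g.partition)
    (fun u u' v => by simp only [Pi.add_apply, add_mul, expect_add_distrib])
    (fun a u v => by simp only [Pi.smul_apply, smul_eq_mul, mul_assoc, mul_expect])
    (fun u v v' => by simp only [Pi.add_apply, mul_add, expect_add_distrib])
    (fun a u v => by simp only [Pi.smul_apply, smul_eq_mul, mul_left_comm _ a, mul_expect])

lemma classForm_onPartition {n : ℕ} (c d : Multiset ℕ → ℂ) :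
    classForm n (onPartition n c) (onPartition n d) =
      cycleMean (⊤ : Subgroup (Perm (Fin n))) (c * d) := by
  simp only [classForm, LinearMap.mk₂_apply, onPartition_partition, cycleMean_top, Pi.mul_apply]

lemma eq_sum_cycleMean_mul_spechtClassFun {n : ℕ} (c : Multiset ℕ → ℂ) (g : Perm (Fin n)) :
    c g.cycleType = ∑ mu : DiagramOfSize n,
      cycleMean (⊤ : Subgroup (Perm (Fin n))) (c * spechtClassFun n mu) *
        spechtClassFun n mu g.cycleType := by
  have hcard : Module.finrank ℂ ((Fintype.card (Fin n)).Partition → ℂ) ≤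
      Fintype.card (DiagramOfSize n) := by
    rw [Module.finrank_fintype_fun_eq_card, Fintype.card_fin]
    exact card_partition_le_card_diagramOfSize n
  have hexpand := congrFun (eq_sum_of_orthonormal (classForm n)
    (v := fun mu : DiagramOfSize n => onPartition n (spechtClassFun n mu))
    (fun mu nu => (classForm_onPartition _ _).trans (cycleMean_top_spechtClassFun_mul mu nu))
    hcard (onPartition n c)) g.partition
  simpa only [Finset.sum_apply, Pi.smul_apply, smul_eq_mul, onPartition_partition,
    classForm_onPartition] using hexpand

lemma cycleMean_top_mul_eq_sum {n : ℕ} (c d : Multiset ℕ → ℂ) :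
    cycleMean (⊤ : Subgroup (Perm (Fin n))) (c * d) = ∑ mu : DiagramOfSize n,
      cycleMean (⊤ : Subgroup (Perm (Fin n))) (c * spechtClassFun n mu) *
        cycleMean (⊤ : Subgroup (Perm (Fin n))) (d * spechtClassFun n mu) := by
  simp only [cycleMean_top (c * d), Pi.mul_apply, eq_sum_cycleMean_mul_spechtClassFun c, sum_mul,
    expect_sum_comm]
  refine sum_congr rfl fun mu _ => ?_
  simp only [mul_assoc, ← mul_expect]
  simp only [cycleMean_top (d * _), Pi.mul_apply, mul_comm]

end SpechtClassFun

/-! ### The branching rule -/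

section ExtendTableau

open Equiv Finset

namespace CoversAt

variable {m : ℕ} {mu rho : YoungDiagram} {i : ℕ}

/-- The cells of `mu` are those of `rho` together with the new corner `(i, rho.rowLen i)`, which
corresponds to `none`. -/
def cellsEquiv (h : CoversAt mu rho i) : Option rho.cells ≃ mu.cells :=
  (Finset.subtypeInsertEquivOption (corner_notMem rho i)).symm.trans
    (Equiv.subtypeEquivRight fun c => by rw [h.cells_eq])

lemma coe_cellsEquiv_none (h : CoversAt mu rho i) :
    (h.cellsEquiv none : ℕ × ℕ) = (i, rho.rowLen i) := rfl

lemma coe_cellsEquiv_some (h : CoversAt mu rho i) (c : rho.cells) :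
    (h.cellsEquiv (some c) : ℕ × ℕ) = c := rfl

/-- The tableau of shape `mu` with entry `0` in the new corner and with the entries of `T`, raised
by one, elsewhere. -/
def extendTableau (h : CoversAt mu rho i) (T : rho.cells ≃ Fin m) : mu.cells ≃ Fin (m + 1) :=
  h.cellsEquiv.symm.trans (T.optionCongr.trans (_root_.finSuccEquiv m).symm)

lemma extendTableau_none (h : CoversAt mu rho i) (T : rho.cells ≃ Fin m) :
    h.extendTableau T (h.cellsEquiv none) = 0 := by
  simp [extendTableau]

lemma extendTableau_some (h : CoversAt mu rho i) (T : rho.cells ≃ Fin m) (c : rho.cells) :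
    h.extendTableau T (h.cellsEquiv (some c)) = (T c).succ := by
  simp [extendTableau]

lemma fst_lt_of_snd_eq (c : rho.cells) (hc : c.1.2 = rho.rowLen i) : c.1.1 < i :=
  lt_of_not_ge fun hi =>
    hc.not_lt ((mem_cells_iff_lt_rowLen.1 c.2).trans_le (rho.rowLen_anti _ _ hi))

lemma finSuccEquiv_spechtPoly_extendTableau (h : CoversAt mu rho i) (T : rho.cells ≃ Fin m) :
    finSuccEquiv ℂ m (spechtPoly (m + 1) mu (h.extendTableau T)) =
      (∏ c : rho.cells with c.1.2 = rho.rowLen i, (Polynomial.C (X (T c)) - Polynomial.X)) *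
        Polynomial.C (spechtPoly m rho T) := by
  have habove (c : rho.cells) : c.1.2 = rho.rowLen i ∧ c.1.1 < i ↔ c.1.2 = rho.rowLen i :=
    and_iff_left_of_imp (fst_lt_of_snd_eq c)
  have hbelow (c : rho.cells) : ¬(rho.rowLen i = c.1.2 ∧ i < c.1.1) := fun hc =>
    (fst_lt_of_snd_eq c hc.1.symm).asymm hc.2
  simp only [spechtPoly, map_prod, prod_filter, Fintype.prod_prod_type, ← h.cellsEquiv.prod_comp,
    Fintype.prod_option, coe_cellsEquiv_none, coe_cellsEquiv_some, habove,
    apply_ite (finSuccEquiv ℂ m), apply_ite Polynomial.C, map_sub, map_one, map_mul, hbelow,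
    lt_irrefl, and_false, if_false, extendTableau_none, extendTableau_some, finSuccEquiv_X_zero,
    finSuccEquiv_X_succ, prod_const_one, one_mul, prod_mul_distrib]

lemma exists_coeff_finSuccEquiv_spechtPoly_extendTableau (h : CoversAt mu rho i)
    (T : rho.cells ≃ Fin m) : ∃ (k : ℕ) (ε : ℂ), ε ≠ 0 ∧
      (finSuccEquiv ℂ m (spechtPoly (m + 1) mu (h.extendTableau T))).coeff k =
        ε • spechtPoly m rho T := by
  set Q : Polynomial (MvPolynomial (Fin m) ℂ) :=
    ∏ c : rho.cells with c.1.2 = rho.rowLen i, (Polynomial.C (X (T c)) - Polynomial.X) with hQ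
  set N := #{c : rho.cells | c.1.2 = rho.rowLen i}
  have hlead : Q.leadingCoeff = C ((-1) ^ N) := by
    have hfactor (c : rho.cells) :
        (Polynomial.C (X (R := ℂ) (T c)) - Polynomial.X).leadingCoeff = -1 := by
      rw [← neg_sub, Polynomial.leadingCoeff_neg, Polynomial.leadingCoeff_X_sub_C]
    simp only [hQ, Polynomial.leadingCoeff_prod, hfactor, prod_const, map_pow, map_neg, map_one, N]
  refine ⟨Q.natDegree, (-1) ^ N, pow_ne_zero _ (neg_ne_zero.2 one_ne_zero), ?_⟩
  rw [finSuccEquiv_spechtPoly_extendTableau, Polynomial.coeff_mul_C, Polynomial.coeff_natDegree,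
    hlead, smul_eq_C_mul]

end CoversAt

end ExtendTableau

section Branching

open Equiv Finset Representation
open scoped BigOperators

/-- The embedding of the permutations of `m` letters as the permutations of `m + 1` letters that
fix `0`. -/
def succPerm (m : ℕ) : Perm (Fin m) →* Perm (Fin (m + 1)) :=
  Perm.extendDomainHom (finSuccAboveEquiv 0)

lemma succPerm_zero {m : ℕ} (g : Perm (Fin m)) : succPerm m g 0 = 0 :=
  Perm.extendDomain_apply_not_subtype g (finSuccAboveEquiv 0) (by simp)

lemma succPerm_succ {m : ℕ} (g : Perm (Fin m)) (x : Fin m) : succPerm m g x.succ = (g x).succ :=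
  Perm.extendDomain_apply_image g (finSuccAboveEquiv 0) x

lemma cycleType_succPerm {m : ℕ} (g : Perm (Fin m)) : (succPerm m g).cycleType = g.cycleType :=
  Perm.cycleType_extendDomain (finSuccAboveEquiv 0)

lemma finSuccEquiv_rename_succPerm {m : ℕ} (g : Perm (Fin m)) (p : MvPolynomial (Fin (m + 1)) ℂ) :
    finSuccEquiv ℂ m (rename (succPerm m g) p) =
      (finSuccEquiv ℂ m p).map (rename g : _ →ₐ[ℂ] MvPolynomial (Fin m) ℂ).toRingHom := by
  induction p using MvPolynomial.induction_on with
  | C a => simp [finSuccEquiv_apply]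
  | add p q hp hq => simp only [map_add, hp, hq, Polynomial.map_add]
  | mul_X p i hp =>
    have hX : finSuccEquiv ℂ m (X (succPerm m g i)) =
        (finSuccEquiv ℂ m (X i)).map (rename g : _ →ₐ[ℂ] MvPolynomial (Fin m) ℂ).toRingHom := by
      refine Fin.cases ?_ (fun k => ?_) i
      · rw [succPerm_zero, finSuccEquiv_X_zero, Polynomial.map_X]
      · rw [succPerm_succ, finSuccEquiv_X_succ, finSuccEquiv_X_succ, Polynomial.map_C]
        exact congrArg Polynomial.C (rename_X _ _).symm
    rw [map_mul, map_mul, map_mul, rename_X, hX, hp, Polynomial.map_mul]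

/-- The restriction of a Specht module to the permutations that fix `0`. -/
abbrev restrictedSpechtRep (m : ℕ) (mu : YoungDiagram) :
    Representation ℂ (Perm (Fin m)) (spechtModule (m + 1) mu) :=
  (spechtRep (m + 1) mu).comp (succPerm m)

variable {m : ℕ}

/-- The coefficient of `X 0 ^ k`, as a linear map on the Specht module. -/
def zeroCoeff (m : ℕ) (mu : YoungDiagram) (k : ℕ) :
    spechtModule (m + 1) mu →ₗ[ℂ] MvPolynomial (Fin m) ℂ :=
  (Polynomial.lcoeff _ k).restrictScalars ℂ ∘ₗ (finSuccEquiv ℂ m).toLinearMap ∘ₗ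
    (spechtModule (m + 1) mu).subtype

lemma zeroCoeff_apply {mu : YoungDiagram} {k : ℕ} (p : spechtModule (m + 1) mu) :
    zeroCoeff m mu k p = (finSuccEquiv ℂ m p.1).coeff k := rfl

lemma zeroCoeff_restrictedSpechtRep {mu : YoungDiagram} {k : ℕ} (g : Perm (Fin m))
    (p : spechtModule (m + 1) mu) :
    zeroCoeff m mu k (restrictedSpechtRep m mu g p) = rename g (zeroCoeff m mu k p) := by
  rw [zeroCoeff_apply, zeroCoeff_apply, MonoidHom.comp_apply, coe_spechtRep_apply,
    finSuccEquiv_rename_succPerm, Polynomial.coeff_map]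
  rfl

lemma finrank_intertwiningMap_pos_of_subrepresentation {α V W : Type*} [Finite α]
    [AddCommGroup V] [Module ℂ V] [FiniteDimensional ℂ V]
    [AddCommGroup W] [Module ℂ W] [FiniteDimensional ℂ W]
    {r : Representation ℂ (Perm α) V} {s : Representation ℂ (Perm α) W} (U : Subrepresentation r)
    {f : IntertwiningMap U.toRepresentation s} (hf : f ≠ 0) :
    0 < Module.finrank ℂ (IntertwiningMap r s) := by
  have : 0 < Module.finrank ℂ (IntertwiningMap U.toRepresentation s) :=
    Module.finrank_pos_iff_exists_ne_zero.2 ⟨f, hf⟩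
  rw [finrank_intertwiningMap_comm] at this ⊢
  obtain ⟨g, hg⟩ := Module.finrank_pos_iff_exists_ne_zero.1 this
  let incl : IntertwiningMap U.toRepresentation r := ⟨U.toSubmodule.subtype, fun _ => rfl⟩
  refine Module.finrank_pos_iff_exists_ne_zero.2 ⟨incl.comp g, fun h => hg ?_⟩
  refine IntertwiningMap.ext (LinearMap.ext fun w => Subtype.ext ?_)
  exact congrArg (fun k : IntertwiningMap s r => k w) h

lemma finrank_intertwiningMap_restrictedSpechtRep_pos {mu rho : YoungDiagram} (hrho : rho.card = m)
    (h : Covers mu rho) :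
    0 < Module.finrank ℂ (IntertwiningMap (restrictedSpechtRep m mu) (spechtRep m rho)) := by
  obtain ⟨i, hi⟩ : ∃ i, CoversAt mu rho i := h
  have T : rho.cells ≃ Fin m := Fintype.equivFinOfCardEq ((Fintype.card_coe _).trans hrho)
  obtain ⟨k, ε, hε, hk⟩ := hi.exists_coeff_finSuccEquiv_spechtPoly_extendTableau T
  let U : Subrepresentation (restrictedSpechtRep m mu) :=
    ⟨(spechtModule m rho).comap (zeroCoeff m mu k), fun g p hp => by
      rw [Submodule.mem_comap, zeroCoeff_restrictedSpechtRep]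
      exact spechtModule_invariant m rho g _ hp⟩
  let f : IntertwiningMap U.toRepresentation (spechtRep m rho) :=
    ⟨(zeroCoeff m mu k).restrict fun _ hp => hp, fun g => LinearMap.ext fun p =>
      Subtype.ext (zeroCoeff_restrictedSpechtRep g p.1)⟩
  have hcoeff : zeroCoeff m mu k (spechtVec (hi.extendTableau T)) = (ε • spechtVec T).1 := hk
  let v : U.toSubmodule := ⟨spechtVec (hi.extendTableau T),
    Submodule.mem_comap.2 (hcoeff.symm ▸ (ε • spechtVec T).2)⟩
  have hv : f v = ε • spechtVec T := Subtype.ext hcoeff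
  refine finrank_intertwiningMap_pos_of_subrepresentation U (f := f) fun hf => ?_
  refine smul_ne_zero hε (spechtVec_ne_zero T) (hv.symm.trans ?_)
  rw [hf]
  rfl

/-- The multiplicity of the Specht module of `rho` in the restriction of that of `mu`. -/
def branchingMult (m : ℕ) (mu rho : YoungDiagram) : ℕ :=
  Module.finrank ℂ (IntertwiningMap (restrictedSpechtRep m mu) (spechtRep m rho))

lemma branchingMult_eq_cycleMean (mu rho : YoungDiagram) :
    (branchingMult m mu rho : ℂ) = cycleMean (⊤ : Subgroup (Perm (Fin m)))
      (spechtClassFun m rho * spechtClassFun (m + 1) mu) := by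
  have hmu (g : Perm (Fin m)) :
      spechtClassFun (m + 1) mu g.cycleType = (restrictedSpechtRep m mu).character g := by
    rw [← cycleType_succPerm, spechtClassFun_cycleType]
    rfl
  simp only [branchingMult, ← expect_character_mul_character, cycleMean_top, Pi.mul_apply, hmu,
    spechtClassFun_cycleType, spechtChar_eq_character]

lemma cycleMean_inducedClassFun_mul_spechtClassFun (mu rho : YoungDiagram) :
    cycleMean (⊤ : Subgroup (Perm (Fin (m + 1))))
      (inducedClassFun (m + 1) (spechtClassFun m rho) * spechtClassFun (m + 1) mu) =
        branchingMult m mu rho := by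
  rw [branchingMult_eq_cycleMean, ← inducedClassFun_mul, cycleMean_top_inducedClassFun]

lemma inducedClassFun_eq_sum (rho : YoungDiagram) (g : Perm (Fin (m + 1))) :
    inducedClassFun (m + 1) (spechtClassFun m rho) g.cycleType =
      ∑ mu : DiagramOfSize (m + 1),
        branchingMult m mu rho * spechtClassFun (m + 1) mu g.cycleType := by
  rw [eq_sum_cycleMean_mul_spechtClassFun (inducedClassFun (m + 1) (spechtClassFun m rho)) g]
  simp only [cycleMean_inducedClassFun_mul_spechtClassFun]

/-- Restricting the representation induced from a Specht module: the norm of `Ind χ` is the mean of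
`Res (Ind χ) * χ`, and `Res (Ind χ) = χ + Ind (Res χ)`. -/
lemma sum_branchingMult_sq (rho : DiagramOfSize m) :
    (∑ mu : DiagramOfSize (m + 1), branchingMult m mu rho ^ 2 : ℂ) =
      1 + cycleMean (⊤ : Subgroup (Perm (Fin m)))
        (inducedClassFun m (spechtClassFun m rho * spechtClassFun m rho)) := by
  set c := spechtClassFun m rho
  have hone : cycleMean (⊤ : Subgroup (Perm (Fin m))) (c * c) = 1 := by
    rw [cycleMean_top_spechtClassFun_mul, if_pos rfl]
  rw [← hone, ← map_add, ← inducedClassFun_succ, ← cycleMean_top_inducedClassFun,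
    inducedClassFun_mul, mul_comm, inducedClassFun_mul, cycleMean_top_mul_eq_sum]
  simp only [c, cycleMean_inducedClassFun_mul_spechtClassFun, sq]

lemma sum_branchingMult_zero_sq (rho : DiagramOfSize 0) :
    ∑ mu : DiagramOfSize 1, branchingMult 0 mu rho ^ 2 = 1 := by
  have h := sum_branchingMult_sq rho
  simp only [cycleMean_top, inducedClassFun, Subsingleton.elim _ (1 : Perm (Fin 0)),
    Perm.cycleType_one, Multiset.sum_zero, Nat.cast_zero, sub_self, zero_mul, expect_const_zero,
    add_zero] at h
  exact_mod_cast h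

lemma sum_branchingMult_succ_sq (rho : DiagramOfSize (m + 1)) :
    ∑ mu : DiagramOfSize (m + 2), branchingMult (m + 1) mu rho ^ 2 =
      1 + ∑ sigma : DiagramOfSize m, branchingMult m rho sigma ^ 2 := by
  have h := sum_branchingMult_sq rho
  rw [cycleMean_top_inducedClassFun, cycleMean_top_mul_eq_sum] at h
  simp only [mul_comm (spechtClassFun (m + 1) _), ← branchingMult_eq_cycleMean, ← sq] at h
  exact_mod_cast h

lemma branchingMult_eq_ite_of_sum_sq_le (rho : DiagramOfSize m)
    (hle : ∑ mu : DiagramOfSize (m + 1), branchingMult m mu rho ^ 2 ≤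
      Fintype.card {mu : DiagramOfSize (m + 1) // Covers mu.1 rho}) (mu : DiagramOfSize (m + 1)) :
    branchingMult m mu rho = if Covers mu.1 rho then 1 else 0 := by
  rw [Fintype.card_subtype, card_filter] at hle
  have hge (nu : DiagramOfSize (m + 1)) (_ : nu ∈ univ) :
      (if Covers nu.1 rho then 1 else 0) ≤ branchingMult m nu rho ^ 2 := by
    split_ifs with h
    · exact Nat.one_le_pow _ _ (finrank_intertwiningMap_restrictedSpechtRep_pos rho.2 h)
    · exact Nat.zero_le _
  have heq := (sum_eq_sum_iff_of_le hge).1 ((sum_le_sum hge).antisymm hle) mu (mem_univ mu)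
  split_ifs at heq ⊢ with h
  · exact (Nat.pow_eq_one.1 heq.symm).resolve_right two_ne_zero
  · exact (pow_eq_zero_iff two_ne_zero).1 heq.symm

theorem branchingMult_eq_ite (rho : DiagramOfSize m) (mu : DiagramOfSize (m + 1)) :
    branchingMult m mu rho = if Covers mu.1 rho then 1 else 0 := by
  induction m with
  | zero =>
    refine branchingMult_eq_ite_of_sum_sq_le rho ?_ mu
    rw [sum_branchingMult_zero_sq]
    exact card_covers_pos 0 rho
  | succ m ih =>
    refine branchingMult_eq_ite_of_sum_sq_le rho ?_ mu
    rw [sum_branchingMult_succ_sq]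
    simp only [fun sigma : DiagramOfSize m => ih sigma rho, ite_pow, one_pow,
      zero_pow two_ne_zero, ← card_filter, ← Fintype.card_subtype]
    exact one_add_card_covers_le m rho

theorem sum_spechtClassFun_covers (rho : DiagramOfSize m) (g : Perm (Fin (m + 1))) :
    ∑ mu : DiagramOfSize (m + 1) with Covers mu.1 rho, spechtClassFun (m + 1) mu g.cycleType =
      inducedClassFun (m + 1) (spechtClassFun m rho) g.cycleType := by
  rw [inducedClassFun_eq_sum, sum_filter]
  refine sum_congr rfl fun mu _ => ?_
  rw [branchingMult_eq_ite]
  split_ifs <;> simp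

end Branching

/-! ### The recurrence -/

section ShortensRow

open Finset

/-- The diagram `gam` arises from `lam` by decreasing a part equal to the `i`-th part of `lam`. -/
def ShortensRow (lam gam : YoungDiagram) (i : ℕ) : Prop :=
  ∃ a, CoversAt lam gam a ∧ lam.rowLen i = lam.rowLen a

namespace ShortensRow

variable {lam gam delta : YoungDiagram} {i : ℕ}

lemma covers (h : ShortensRow lam gam i) : Covers lam gam :=
  let ⟨_, ha, _⟩ := h
  ha.covers

lemma rowLen_pos (h : ShortensRow lam gam i) : 0 < lam.rowLen i := by
  obtain ⟨a, ha, hai⟩ := h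
  rw [hai, ← ha.1]
  exact Nat.succ_pos _

lemma unique (h : ShortensRow lam gam i) (h' : ShortensRow lam delta i) : gam = delta := by
  obtain ⟨a, ha, hai⟩ := h
  obtain ⟨b, hb, hbi⟩ := h'
  have hab : lam.rowLen a = lam.rowLen b := hai.symm.trans hbi
  rcases lt_trichotomy a b with hlt | rfl | hlt
  · exact absurd hab (ha.rowLen_succ_lt hlt).ne'
  · exact ha.lower_unique hb
  · exact absurd hab (hb.rowLen_succ_lt hlt).ne

end ShortensRow

variable {lam gam : YoungDiagram} {i : ℕ}

lemma exists_shortensRow (h : 0 < lam.rowLen i) : ∃ gam, ShortensRow lam gam i := by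
  set b := lam.colLen (lam.rowLen i - 1)
  have hb (j : ℕ) : j < b ↔ lam.rowLen i ≤ lam.rowLen j := by
    rw [← YoungDiagram.mem_iff_lt_colLen, YoungDiagram.mem_iff_lt_rowLen]
    omega
  have hib : i < b := (hb i).2 le_rfl
  have hlast : lam.rowLen i = lam.rowLen (b - 1) :=
    ((hb _).1 (by omega)).antisymm (lam.rowLen_anti _ _ (by omega))
  obtain ⟨gam, hgam⟩ := exists_coversAt_remove (lam := lam) (i := b - 1) fun j hj => by
    rw [← hlast, ← not_le, ← hb]
    omega
  exact ⟨gam, b - 1, hgam, hlast⟩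

lemma cCoeff_eq_card (h : Covers lam gam) :
    cCoeff lam gam = #{i ∈ range lam.card | ShortensRow lam gam i} := by
  obtain ⟨a, ha⟩ : ∃ a, CoversAt lam gam a := h
  rw [cCoeff, ← Set.ncard_coe_finset]
  congr 1
  ext i
  rw [mem_coe, mem_filter, mem_range]
  constructor
  · rintro ⟨b, hb, hib⟩
    have hi : ShortensRow lam gam i := ⟨a, ha, ha.row_unique hb ▸ hib⟩
    exact ⟨lt_card_of_rowLen_pos hi.rowLen_pos, hi⟩
  · rintro ⟨-, b, hb, hib⟩
    exact ⟨b, hb.1, hib⟩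

end ShortensRow

section Recurrence

open Equiv Finset
open scoped BigOperators

variable {m n : ℕ}

lemma rowLen_rowIndex_pos {lam : YoungDiagram} (hlam : lam.card = n) (j : Fin n) :
    0 < lam.rowLen (rowIndex lam j) := by
  rw [← ncard_rowIndex_eq hlam, Set.ncard_pos]
  exact ⟨j, rfl⟩

lemma sum_inv_rowLen_rowIndex {lam : YoungDiagram} (hlam : lam.card = n) {s : Finset ℕ}
    (hs : ∀ i ∈ s, 0 < lam.rowLen i) :
    ∑ j : Fin n with rowIndex lam j.1 ∈ s, (lam.rowLen (rowIndex lam j.1) : ℂ)⁻¹ = #s := by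
  rw [← sum_fiberwise_of_maps_to (g := fun j : Fin n => rowIndex lam j) (t := s)
    fun j hj => (mem_filter.1 hj).2, card_eq_sum_ones, Nat.cast_sum]
  refine sum_congr rfl fun i hi => ?_
  have hcard : #{j : Fin n | rowIndex lam j = i} = lam.rowLen i := by
    rw [← ncard_rowIndex_eq hlam, Set.ncard_eq_toFinset_card', Set.toFinset_ofPred]
  have hfilter : filter (fun j : Fin n => rowIndex lam j = i) {j | rowIndex lam j.1 ∈ s} =
      ({j | rowIndex lam j.1 = i} : Finset (Fin n)) := by
    rw [filter_filter]
    exact filter_congr fun j _ => and_iff_right_of_imp fun hj => hj ▸ hi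
  rw [hfilter, sum_congr rfl (g := fun _ => (lam.rowLen i : ℂ)⁻¹) fun j hj => by
    rw [(mem_filter.1 hj).2], sum_const, hcard, nsmul_eq_mul, Nat.cast_one,
    mul_inv_cancel₀ (Nat.cast_ne_zero.2 (hs i hi).ne')]

lemma ncard_ne_and_eq {α ι : Type*} [Finite α] (r : α → ι) (j : α) (k : ι) :
    {x : {x // x ≠ j} | r x = k}.ncard = {x | r x = k}.ncard - if k = r j then 1 else 0 := by
  have himage : (Subtype.val '' {x : {x // x ≠ j} | r x = k}) = {x | r x = k} \ {j} := by
    ext x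
    simp [and_comm]
  rw [← Set.ncard_image_of_injective _ Subtype.val_injective, himage]
  split_ifs with hk
  · exact Set.ncard_sdiff_singleton_of_mem hk.symm
  · rw [Set.sdiff_singleton_eq_self (s := {x | r x = k}) fun hj => hk (Eq.symm hj), Nat.sub_zero]

lemma cycleMean_youngSubgroup_removed {lam gam : YoungDiagram} (hlam : lam.card = m + 1)
    {j : Fin (m + 1)} (h : ShortensRow lam gam (rowIndex lam j)) :
    cycleMean (youngSubgroup fun x : {x // x ≠ j} => rowIndex lam x) =
      cycleMean (youngH m gam) := by
  obtain ⟨a, ha, hja⟩ := h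
  have hgam : gam.card = m := Nat.succ_injective (ha.card_eq.symm.trans hlam)
  refine cycleMean_youngSubgroup_congr (r' := fun y : Fin m => rowIndex gam y)
    (swap (rowIndex lam j) a) fun k => ?_
  rw [ncard_ne_and_eq (fun x : Fin (m + 1) => rowIndex lam x) j k, ncard_rowIndex_eq hlam,
    ncard_rowIndex_eq hgam, swap_apply_def]
  split_ifs with hkj hka
  · rw [hkj, hja, ← ha.1, Nat.add_sub_cancel]
  · rw [ha.2 _ fun hj => hkj (hka.trans hj.symm), hja, hka, Nat.sub_zero]
  · rw [ha.2 k hka, Nat.sub_zero]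

lemma cycleMean_youngH_inducedClassFun (lam : DiagramOfSize (m + 1)) (c : Multiset ℕ → ℂ) :
    cycleMean (youngH (m + 1) lam) (inducedClassFun (m + 1) c) =
      ∑ gam : DiagramOfSize m with Covers lam.1 gam.1,
        cCoeff lam gam * cycleMean (youngH m gam) c := by
  have hremove (j : Fin (m + 1)) : ∃ gam : DiagramOfSize m,
      ShortensRow lam gam (rowIndex lam j) := by
    obtain ⟨gam, hgam⟩ := exists_shortensRow (rowLen_rowIndex_pos lam.2 j)
    exact ⟨⟨gam, Nat.succ_injective (hgam.covers.card_eq.symm.trans lam.2)⟩, hgam⟩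
  choose shorten hshorten using hremove
  have hmaps (j : Fin (m + 1)) (_ : j ∈ univ) :
      shorten j ∈ ({gam : DiagramOfSize m | Covers lam.1 gam.1} : Finset _) :=
    mem_filter.2 ⟨mem_univ _, (hshorten j).covers⟩
  have hfiber (gam : DiagramOfSize m) (j : Fin (m + 1)) : shorten j = gam ↔
      rowIndex lam j ∈ ({i ∈ range lam.1.card | ShortensRow lam gam i} : Finset ℕ) := by
    rw [mem_filter, mem_range]
    refine ⟨?_, fun h => Subtype.ext ((hshorten j).unique h.2)⟩
    rintro rfl
    exact ⟨lt_card_of_rowLen_pos (hshorten j).rowLen_pos, hshorten j⟩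
  have hsum := cycleMean_inducedClassFun (fun x : Fin (m + 1) => rowIndex lam x) c
  rw [Fintype.card_fin] at hsum
  refine hsum.trans ?_
  simp only [ncard_rowIndex_eq lam.2, cycleMean_youngSubgroup_removed lam.2 (hshorten _)]
  refine (sum_fiberwise_of_maps_to hmaps _).symm.trans (sum_congr rfl fun gam hgam => ?_)
  rw [cCoeff_eq_card (mem_filter.1 hgam).2, ← sum_inv_rowLen_rowIndex lam.2
    fun i hi => (mem_filter.1 hi).2.rowLen_pos, sum_mul]
  refine sum_congr (filter_congr fun j _ => hfiber gam j) fun j hj => ?_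
  rw [Subtype.ext ((hshorten j).unique (mem_filter.1 (mem_filter.1 hj).2).2)]

lemma sum_cycleMean_youngH_covers (lam : DiagramOfSize (m + 1)) (rho : DiagramOfSize m) :
    ∑ mu : DiagramOfSize (m + 1) with Covers mu.1 rho,
        cycleMean (youngH (m + 1) lam) (spechtClassFun (m + 1) mu) =
      ∑ gam : DiagramOfSize m with Covers lam.1 gam.1,
        cCoeff lam gam * cycleMean (youngH m gam) (spechtClassFun m rho) := by
  rw [← cycleMean_youngH_inducedClassFun]
  simp only [cycleMean_apply, ← sum_spechtClassFun_covers, expect_sum_comm]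

lemma Mmult_eq_conj_cycleMean (ka th : YoungDiagram) :
    Mmult n ka th = starRingEnd ℂ (cycleMean (youngH n th) (spechtClassFun n ka)) := by
  have hreal (g : Perm (Fin n)) :
      starRingEnd ℂ (indTrivChar (youngH n th) g) = indTrivChar (youngH n th) g := by
    simp only [indTrivChar, map_mul, map_inv₀, Complex.conj_natCast]
  have hfrob := expect_indTrivChar_mul (youngH n th) (f := spechtChar n ka) fun x g =>
    (spechtRep n ka).char_conj g x
  simp only [cycleMean_apply, spechtClassFun_cycleType, ← hfrob]
  simp only [Mmult, innerChar, Fintype.expect_eq_sum_div_card, div_eq_inv_mul, map_sum, map_mul,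
    map_inv₀, Complex.conj_natCast, hreal]

end Recurrence

/-- Recurrence for the multiplicities of Specht modules in induced representations:
`Σ_{μ ⊢ n, μ ≻ ρ} M(μ,λ) = Σ_{γ ⊢ n-1, γ ≺ λ} c(λ,γ) · M(ρ,γ)`. -/
theorem mult_recurrence (n : ℕ) (hn : 1 ≤ n) (lam rho : YoungDiagram)
    (hlam : lam.card = n) (hrho : rho.card = n - 1) :
    ∑ᶠ (mu : YoungDiagram) (_ : mu.card = n ∧ Covers mu rho), Mmult n mu lam =
      ∑ᶠ (ga : YoungDiagram) (_ : ga.card = n - 1 ∧ Covers lam ga),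
        (cCoeff lam ga : ℂ) * Mmult (n - 1) rho ga := by
  obtain ⟨m, rfl⟩ : ∃ m, n = m + 1 := ⟨n - 1, (Nat.sub_add_cancel hn).symm⟩
  rw [Nat.add_sub_cancel] at hrho ⊢
  rw [finsum_diagramOfSize, finsum_diagramOfSize]
  have hmean := sum_cycleMean_youngH_covers ⟨lam, hlam⟩ ⟨rho, hrho⟩
  simpa only [Mmult_eq_conj_cycleMean, map_sum, map_mul, Complex.conj_natCast] using
    congrArg (starRingEnd ℂ) hmean

end
end

section
/- Let λ ⊢ n and ρ ⊢ n−1 be arbitrary partitions. Then the Kostka numbers satisfy the recurrence Σ_{μ ⊢ n, μ ≻ ρ} K(μ,λ) = Σ_{γ ⊢ n−1, γ ≺ λ} c(λ,γ) · K(ρ,γ). -/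
open scoped Classical

noncomputable section

open MvPolynomial

/-- `T` has weight `lam`: the entry `i` occurs in `T` exactly `lam.rowLen i` times. -/
def HasWeight {mu : YoungDiagram} (T : SemistandardYoungTableau mu) (lam : YoungDiagram) : Prop :=
  ∀ i : ℕ, (mu.cells.filter fun c => T c.1 c.2 = i).card = lam.rowLen i

/-- The Kostka number `K(μ,λ)`: the number of semistandard Young tableaux of shape `μ`
and weight `λ`. -/
noncomputable def kostka (mu lam : YoungDiagram) : ℕ :=
  Nat.card {T : SemistandardYoungTableau mu // HasWeight T lam}

/-!
Removing the cells with the largest entry of a semistandard tableau removes a horizontal strip, so a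
Kostka number is obtained from the indicator function of the empty diagram by applying one Pieri
operator (summation over all ways of removing a horizontal strip of size `k`) for each part `k` of
the weight. These operators commute by the Bender–Knuth involution, hence the weight may be regarded
as a multiset. Adding a cell and removing a horizontal strip of size `k + 1` almost commute as well:
the defect is the Pieri operator for `k`. Summation over upper covers therefore acts on products of
Pieri operators like a derivation that lowers one index at a time, and annihilates the indicator
function. Grouping the equal parts of the weight produces the coefficients `c(λ, γ)`.
-/

namespace Kostka

open scoped Finset

/-! ### Interlacing sequences -/

/-- `f` and `g` interlace: `f 0 ≥ g 0 ≥ f 1 ≥ g 1 ≥ ⋯`. For the row lengths of two Young diagrams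
`μ` and `ν`, this says that `ν ⊆ μ` and that `μ / ν` is a horizontal strip. -/
def Interlaces (f g : ℕ → ℕ) : Prop :=
  ∀ i, g i ≤ f i ∧ f (i + 1) ≤ g i

section Interlaces

variable {f g h : ℕ → ℕ}

lemma Interlaces.antitone_left (hfg : Interlaces f g) : Antitone f :=
  antitone_nat_of_succ_le fun i => (hfg i).2.trans (hfg i).1

lemma Interlaces.antitone_right (hfg : Interlaces f g) : Antitone g :=
  antitone_nat_of_succ_le fun i => (hfg (i + 1)).1.trans (hfg i).2

/-- The least possible value of `g i`, given that `g` interlaces `f` from below and `h` from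
above. -/
def toggleLower (f h : ℕ → ℕ) (i : ℕ) : ℕ :=
  max (h i) (f (i + 1))

/-- The greatest possible value of `g i`, given that `g` interlaces `f` from below and `h` from
above. -/
def toggleUpper (f h : ℕ → ℕ) : ℕ → ℕ
  | 0 => f 0
  | i + 1 => min (f (i + 1)) (h i)

/-- The Bender–Knuth toggle of a sequence `g` between `f` and `h`: every `g i` is reflected in the
interval in which it may vary. -/
def toggle (f h g : ℕ → ℕ) (i : ℕ) : ℕ :=
  toggleLower f h i + toggleUpper f h i - g i

lemma interlaces_and_interlaces_iff :
    Interlaces f g ∧ Interlaces g h ↔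
      ∀ i, toggleLower f h i ≤ g i ∧ g i ≤ toggleUpper f h i := by
  constructor
  · rintro ⟨hfg, hgh⟩ (_ | i)
    · exact ⟨max_le (hgh 0).1 (hfg 0).2, (hfg 0).1⟩
    · exact ⟨max_le (hgh _).1 (hfg _).2, le_min (hfg _).1 (hgh _).2⟩
  · intro hg
    have hlower i := max_le_iff.1 (hg i).1
    have hupper i := le_min_iff.1 (hg (i + 1)).2
    refine ⟨fun i => ⟨?_, (hlower i).2⟩, fun i => ⟨(hlower i).1, (hupper i).2⟩⟩
    cases i with
    | zero => exact (hg 0).2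
    | succ i => exact (hupper i).1

lemma interlaces_toggle (hfg : Interlaces f g) (hgh : Interlaces g h) :
    Interlaces f (toggle f h g) ∧ Interlaces (toggle f h g) h := by
  rw [interlaces_and_interlaces_iff]
  intro i
  have := interlaces_and_interlaces_iff.1 ⟨hfg, hgh⟩ i
  unfold toggle
  omega

lemma toggle_add_self (hfg : Interlaces f g) (hgh : Interlaces g h) (i : ℕ) :
    toggle f h g i + g i = toggleLower f h i + toggleUpper f h i := by
  have := interlaces_and_interlaces_iff.1 ⟨hfg, hgh⟩ i
  unfold toggle
  omega

lemma toggle_toggle (hfg : Interlaces f g) (hgh : Interlaces g h) :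
    toggle f h (toggle f h g) = g := by
  funext i
  have := toggle_add_self hfg hgh i
  have := toggle_add_self (interlaces_toggle hfg hgh).1 (interlaces_toggle hfg hgh).2 i
  omega

lemma sum_toggleLower_add_sum_toggleUpper (f h : ℕ → ℕ) (N : ℕ) :
    ∑ i ∈ Finset.range N, toggleLower f h i + ∑ i ∈ Finset.range (N + 1), toggleUpper f h i =
      ∑ i ∈ Finset.range N, h i + ∑ i ∈ Finset.range (N + 1), f i := by
  have hmaxmin i : toggleLower f h i + toggleUpper f h (i + 1) = h i + f (i + 1) :=
    (add_comm _ _).trans <| (congrArg (· + _) (min_comm _ _)).trans (min_add_max _ _)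
  rw [Finset.sum_range_succ', Finset.sum_range_succ' f, ← add_assoc, ← add_assoc,
    ← Finset.sum_add_distrib, ← Finset.sum_add_distrib, Finset.sum_congr rfl fun i _ => hmaxmin i]
  rfl

lemma sum_toggle_add_sum (hfg : Interlaces f g) (hgh : Interlaces g h) {N : ℕ} (hN : f N = 0) :
    ∑ i ∈ Finset.range (N + 1), toggle f h g i + ∑ i ∈ Finset.range (N + 1), g i =
      ∑ i ∈ Finset.range (N + 1), f i + ∑ i ∈ Finset.range (N + 1), h i := by
  have hlower : toggleLower f h N = 0 := by
    have := hfg N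
    have := hgh N
    unfold toggleLower
    omega
  have hh : h N = 0 := by
    unfold toggleLower at hlower
    omega
  rw [← Finset.sum_add_distrib, Finset.sum_congr rfl fun i _ => toggle_add_self hfg hgh i,
    Finset.sum_add_distrib, Finset.sum_range_succ (toggleLower f h), hlower, add_zero,
    sum_toggleLower_add_sum_toggleUpper, Finset.sum_range_succ h, hh, add_zero, add_comm]

lemma interlaces_add_single_zero (hfg : Interlaces f g) : Interlaces (f + Pi.single 0 1) g := by
  intro i
  have := hfg i
  simp only [Pi.add_apply, Pi.single_apply]
  grind

lemma interlaces_add_single_succ_iff (hfg : Interlaces f g) (i : ℕ) :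
    Interlaces (f + Pi.single (i + 1) 1) g ↔ f (i + 1) < g i := by
  refine ⟨fun h => by simpa using (h i).2, fun h j => ?_⟩
  have := hfg j
  simp only [Pi.add_apply, Pi.single_apply]
  grind

lemma interlaces_sub_single_iff (hfg : Interlaces f g) (i : ℕ) :
    0 < g i ∧ Interlaces f (g - Pi.single i 1) ↔ f (i + 1) < g i := by
  refine ⟨fun ⟨_, h⟩ => ?_, fun h => ⟨by omega, fun j => ?_⟩⟩
  · have := (h i).2
    simp only [Pi.sub_apply, Pi.single_eq_same] at this
    omega
  · have := hfg j
    simp only [Pi.sub_apply, Pi.single_apply]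
    grind

lemma eq_add_one_of_interlaces_add_single (hfg : ¬ Interlaces f g) {i : ℕ}
    (h : Interlaces (f + Pi.single i 1) g) : g i = f i + 1 := by
  by_contra hne
  refine hfg fun j => ?_
  have := h j
  simp only [Pi.add_apply, Pi.single_apply] at this
  grind

lemma eq_add_one_of_interlaces_sub_single (hfg : ¬ Interlaces f g) {i : ℕ} (hpos : 0 < g i)
    (h : Interlaces f (g - Pi.single i 1)) : g i = f i + 1 := by
  by_contra hne
  refine hfg fun j => ?_
  have := h j
  simp only [Pi.sub_apply, Pi.single_apply] at this
  grind

lemma interlaces_add_single_iff_of_not_interlaces (hf : Antitone f) (hg : Antitone g)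
    (hfg : ¬ Interlaces f g) (i : ℕ) :
    Interlaces (f + Pi.single i 1) g ↔ 0 < g i ∧ Interlaces f (g - Pi.single i 1) := by
  constructor
  · intro h
    have hi := eq_add_one_of_interlaces_add_single hfg h
    refine ⟨by omega, fun j => ?_⟩
    have := h j
    have := hf (Nat.le_add_right j 1)
    simp only [Pi.add_apply, Pi.sub_apply, Pi.single_apply] at *
    grind
  · rintro ⟨hpos, h⟩ j
    have hi := eq_add_one_of_interlaces_sub_single hfg hpos h
    have := h j
    have := hg (Nat.le_add_right j 1)
    simp only [Pi.add_apply, Pi.sub_apply, Pi.single_apply] at *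
    grind

/-- The rows to which a box can be added so that the result still interlaces with `g`. -/
def addableRows (f g : ℕ → ℕ) : Set ℕ :=
  {i | Interlaces (f + Pi.single i 1) g}

/-- The rows from which a box can be removed so that the result still interlaces with `f`. The
condition `0 < g i` excludes the truncated subtraction `0 - 1 = 0`. -/
def removableRows (f g : ℕ → ℕ) : Set ℕ :=
  {i | 0 < g i ∧ Interlaces f (g - Pi.single i 1)}

lemma eq_add_single_iff {i : ℕ} :
    g = f + Pi.single i 1 ↔ 0 < g i ∧ f = g - Pi.single i 1 := by
  refine ⟨fun h => by simp [h], fun ⟨_, h⟩ => funext fun j => ?_⟩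
  simp only [h, Pi.add_apply, Pi.sub_apply, Pi.single_apply]
  grind

lemma add_single_injective (f : ℕ → ℕ) : Function.Injective fun i => f + Pi.single i 1 := by
  intro i j hij
  simpa [Pi.single_apply] using congrFun hij i

lemma sub_single_injOn (g : ℕ → ℕ) : Set.InjOn (fun i => g - Pi.single i 1) {i | 0 < g i} := by
  intro i (hi : 0 < g i) j _ hij
  have := congrFun hij i
  simp only [Pi.sub_apply, Pi.single_apply] at this
  grind

lemma addableRows_eq_insert (hfg : Interlaces f g) :
    addableRows f g = insert 0 (Nat.succ '' removableRows f g) := by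
  ext (_ | i)
  · simpa [addableRows] using interlaces_add_single_zero hfg
  · simp [addableRows, removableRows, interlaces_add_single_succ_iff hfg,
      interlaces_sub_single_iff hfg]

lemma ncard_addableRows (hf : Antitone f) (hg : Antitone g) {N : ℕ} (hN : g N = 0) :
    (addableRows f g).ncard =
      (removableRows f g).ncard + if Interlaces f g then 1 else 0 := by
  split_ifs with hfg
  · have hfin : (removableRows f g).Finite := by
      refine (Set.finite_lt_nat N).subset fun i ⟨hpos, _⟩ => ?_
      by_contra hi
      have : g i ≤ g N := hg (not_lt.1 hi)
      omega
    rw [addableRows_eq_insert hfg, Set.ncard_insert_of_notMem (by simp) (hfin.image _),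
      Set.ncard_image_of_injective _ Nat.succ_injective]
  · rw [add_zero]
    congr 1
    ext i
    exact interlaces_add_single_iff_of_not_interlaces hf hg hfg i

end Interlaces

/-! ### Young diagrams and their row lengths -/

lemma rowLen_injective : Function.Injective YoungDiagram.rowLen := by
  refine fun μ ν h => SetLike.ext fun ⟨i, j⟩ => ?_
  rw [YoungDiagram.mem_iff_lt_rowLen, YoungDiagram.mem_iff_lt_rowLen, h]

lemma rowLen_antitone (μ : YoungDiagram) : Antitone μ.rowLen :=
  fun i j => μ.rowLen_anti i j

lemma rowLen_le_card (μ : YoungDiagram) (i : ℕ) : μ.rowLen i ≤ μ.card := by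
  rw [YoungDiagram.rowLen_eq_card]
  exact Finset.card_le_card (Finset.filter_subset _ _)

lemma colLen_le_card (μ : YoungDiagram) (j : ℕ) : μ.colLen j ≤ μ.card := by
  rw [YoungDiagram.colLen_eq_card]
  exact Finset.card_le_card (Finset.filter_subset _ _)

lemma rowLen_eq_zero_iff {μ : YoungDiagram} {i : ℕ} : μ.rowLen i = 0 ↔ μ.colLen 0 ≤ i := by
  rw [← not_lt, ← YoungDiagram.mem_iff_lt_colLen, YoungDiagram.mem_iff_lt_rowLen, not_lt,
    nonpos_iff_eq_zero]

lemma rowLen_card (μ : YoungDiagram) : μ.rowLen μ.card = 0 :=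
  rowLen_eq_zero_iff.2 (colLen_le_card μ 0)

lemma rowLen_le_rowLen_iff {μ ν : YoungDiagram} : ν.rowLen ≤ μ.rowLen ↔ ν ≤ μ := by
  refine ⟨fun h ⟨i, j⟩ => ?_, fun h i => le_of_forall_lt fun j => ?_⟩
  · exact fun hν => YoungDiagram.mem_iff_lt_rowLen.2
      ((YoungDiagram.mem_iff_lt_rowLen.1 hν).trans_le (h i))
  · rw [← YoungDiagram.mem_iff_lt_rowLen, ← YoungDiagram.mem_iff_lt_rowLen]
    exact fun hν => h hν

lemma card_eq_sum_rowLen {μ : YoungDiagram} {N : ℕ} (hN : μ.rowLen N = 0) :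
    μ.card = ∑ i ∈ Finset.range (N + 1), μ.rowLen i := by
  have hmaps : Set.MapsTo Prod.fst (μ.cells : Set (ℕ × ℕ)) (Finset.range (N + 1)) := by
    rintro ⟨i, j⟩ hij
    have hj : j < μ.rowLen i := YoungDiagram.mem_iff_lt_rowLen.1 (by simpa using hij)
    have hi : i < μ.colLen 0 := lt_of_not_ge fun h => by
      rw [rowLen_eq_zero_iff.2 h] at hj
      omega
    have := rowLen_eq_zero_iff.1 hN
    exact Finset.mem_coe.2 (Finset.mem_range.2 (by omega))
  rw [YoungDiagram.card, Finset.card_eq_sum_card_fiberwise hmaps]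
  exact Finset.sum_congr rfl fun i _ => μ.rowLen_eq_card.symm

lemma finite_setOf_card_le (n : ℕ) : {μ : YoungDiagram | μ.card ≤ n}.Finite := by
  have hinj : Function.Injective YoungDiagram.cells := fun _ _ => YoungDiagram.ext
  refine ((Finset.range n ×ˢ Finset.range n).powerset.finite_toSet.preimage hinj.injOn).subset
    fun μ (hμ : μ.card ≤ n) => ?_
  refine Finset.mem_coe.2 (Finset.mem_powerset.2 fun ⟨i, j⟩ hij => ?_)
  rw [YoungDiagram.mem_cells] at hij
  have hi := (YoungDiagram.mem_iff_lt_colLen.1 hij).trans_le (colLen_le_card μ j)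
  have hj := (YoungDiagram.mem_iff_lt_rowLen.1 hij).trans_le (rowLen_le_card μ i)
  simp only [Finset.mem_product, Finset.mem_range]
  omega

/-- The finset of Young diagrams with at most `n` cells. -/
def diagramsOfCardLE (n : ℕ) : Finset YoungDiagram :=
  (finite_setOf_card_le n).toFinset

lemma mem_diagramsOfCardLE {n : ℕ} {μ : YoungDiagram} : μ ∈ diagramsOfCardLE n ↔ μ.card ≤ n := by
  simp [diagramsOfCardLE]

lemma exists_rowLen_eq {f : ℕ → ℕ} (hf : Antitone f) {N : ℕ} (hN : f N = 0) :
    ∃ μ : YoungDiagram, μ.rowLen = f := by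
  let cells := {c ∈ Finset.range N ×ˢ Finset.range (f 0) | c.2 < f c.1}
  have mem_cells i j : (i, j) ∈ cells ↔ j < f i := by
    have hzero (hi : N ≤ i) : f i = 0 := Nat.eq_zero_of_le_zero (hN ▸ hf hi)
    have : f i ≤ f 0 := hf (Nat.zero_le i)
    simp only [cells, Finset.mem_filter, Finset.mem_product, Finset.mem_range]
    grind
  have hlower : IsLowerSet (cells : Set (ℕ × ℕ)) := by
    rintro ⟨i, j⟩ ⟨i', j'⟩ ⟨hi, hj⟩ hij
    rw [Finset.mem_coe, mem_cells] at hij ⊢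
    exact (hj.trans_lt hij).trans_le (hf hi)
  refine ⟨⟨cells, hlower⟩, funext fun i => eq_of_forall_lt_iff fun j => ?_⟩
  rw [← YoungDiagram.mem_iff_lt_rowLen, YoungDiagram.mem_mk, mem_cells]

lemma Interlaces.exists_rowLen_eq_left {f : ℕ → ℕ} {ν : YoungDiagram}
    (h : Interlaces f ν.rowLen) : ∃ μ : YoungDiagram, μ.rowLen = f :=
  exists_rowLen_eq (N := ν.card + 1) h.antitone_left <|
    Nat.eq_zero_of_le_zero ((h ν.card).2.trans (rowLen_card ν).le)

lemma Interlaces.exists_rowLen_eq_right {f : ℕ → ℕ} {μ : YoungDiagram}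
    (h : Interlaces μ.rowLen f) : ∃ ν : YoungDiagram, ν.rowLen = f :=
  exists_rowLen_eq (N := μ.card) h.antitone_right <|
    Nat.eq_zero_of_le_zero ((h μ.card).1.trans (rowLen_card μ).le)

lemma Interlaces.le {μ ν : YoungDiagram} (h : Interlaces μ.rowLen ν.rowLen) : ν ≤ μ :=
  rowLen_le_rowLen_iff.1 fun i => (h i).1

lemma card_le_card_of_le {μ ν : YoungDiagram} (h : ν ≤ μ) : ν.card ≤ μ.card :=
  Finset.card_le_card (YoungDiagram.cells_subset_iff.2 h)

/-! ### Covering relations and horizontal strips -/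

lemma covers_iff {μ ν : YoungDiagram} :
    Covers μ ν ↔ ∃ i, μ.rowLen = ν.rowLen + Pi.single i 1 := by
  refine exists_congr fun i => ⟨fun ⟨hi, hne⟩ => funext fun j => ?_, fun h => ?_⟩
  · obtain rfl | hj := eq_or_ne j i
    · simp [hi]
    · simp [hj, hne j hj]
  · exact ⟨by simp [h], fun j hj => by simp [h, hj]⟩

lemma card_eq_of_covers {μ ν : YoungDiagram} (h : Covers μ ν) : μ.card = ν.card + 1 := by
  obtain ⟨i, hi⟩ := covers_iff.1 h
  have hcells : μ.cells = insert (i, ν.rowLen i) ν.cells := by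
    ext ⟨a, b⟩
    simp only [Finset.mem_insert, YoungDiagram.mem_cells, YoungDiagram.mem_iff_lt_rowLen, hi,
      Pi.add_apply, Pi.single_apply, Prod.mk.injEq]
    grind
  rw [YoungDiagram.card, hcells, Finset.card_insert_of_notMem]
  rw [YoungDiagram.mem_cells, YoungDiagram.mem_iff_lt_rowLen]
  exact lt_irrefl _

/-- The finset of Young diagrams obtained from `ρ` by adding one cell. -/
def upperCovers (ρ : YoungDiagram) : Finset YoungDiagram :=
  {μ ∈ diagramsOfCardLE (ρ.card + 1) | Covers μ ρ}

lemma mem_upperCovers {ρ μ : YoungDiagram} : μ ∈ upperCovers ρ ↔ Covers μ ρ := by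
  rw [upperCovers, Finset.mem_filter, mem_diagramsOfCardLE, and_iff_right_iff_imp]
  exact fun h => (card_eq_of_covers h).le

/-- The finset of Young diagrams obtained from `μ` by removing one cell. -/
def lowerCovers (μ : YoungDiagram) : Finset YoungDiagram :=
  {ν ∈ diagramsOfCardLE μ.card | Covers μ ν}

lemma mem_lowerCovers {μ ν : YoungDiagram} : ν ∈ lowerCovers μ ↔ Covers μ ν := by
  rw [lowerCovers, Finset.mem_filter, mem_diagramsOfCardLE, and_iff_right_iff_imp]
  exact fun h => (Nat.le_succ _).trans (card_eq_of_covers h).ge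

/-- The finset of Young diagrams `ν` such that `μ / ν` is a horizontal strip with `k` cells. -/
def horizontalStrips (k : ℕ) (μ : YoungDiagram) : Finset YoungDiagram :=
  {ν ∈ diagramsOfCardLE μ.card | Interlaces μ.rowLen ν.rowLen ∧ ν.card + k = μ.card}

lemma mem_horizontalStrips {k : ℕ} {μ ν : YoungDiagram} :
    ν ∈ horizontalStrips k μ ↔ Interlaces μ.rowLen ν.rowLen ∧ ν.card + k = μ.card := by
  rw [horizontalStrips, Finset.mem_filter, mem_diagramsOfCardLE, and_iff_right_iff_imp]
  exact fun h => h.2 ▸ Nat.le_add_right _ _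

/-- The Bender–Knuth toggle of the middle diagram of a chain `κ ⊆ ν ⊆ μ` of horizontal strips.
Outside of this situation the value is meaningless. -/
def toggleDiagram (μ κ ν : YoungDiagram) : YoungDiagram :=
  Function.invFun YoungDiagram.rowLen (toggle μ.rowLen κ.rowLen ν.rowLen)

section toggleDiagram

variable {μ ν κ : YoungDiagram}

lemma rowLen_toggleDiagram (h₁ : Interlaces μ.rowLen ν.rowLen)
    (h₂ : Interlaces ν.rowLen κ.rowLen) :
    (toggleDiagram μ κ ν).rowLen = toggle μ.rowLen κ.rowLen ν.rowLen :=
  Function.invFun_eq (interlaces_toggle h₁ h₂).1.exists_rowLen_eq_right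

lemma toggleDiagram_toggleDiagram (h₁ : Interlaces μ.rowLen ν.rowLen)
    (h₂ : Interlaces ν.rowLen κ.rowLen) :
    toggleDiagram μ κ (toggleDiagram μ κ ν) = ν := by
  rw [toggleDiagram, rowLen_toggleDiagram h₁ h₂, toggle_toggle h₁ h₂]
  exact Function.leftInverse_invFun rowLen_injective ν

lemma card_toggleDiagram (h₁ : Interlaces μ.rowLen ν.rowLen)
    (h₂ : Interlaces ν.rowLen κ.rowLen) :
    (toggleDiagram μ κ ν).card + ν.card = μ.card + κ.card := by
  obtain ⟨h₁', h₂'⟩ := interlaces_toggle h₁ h₂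
  rw [← rowLen_toggleDiagram h₁ h₂] at h₁' h₂'
  obtain ⟨N, hN⟩ : ∃ N, μ.rowLen N = 0 := ⟨_, rowLen_card μ⟩
  have zero_of_le {α : YoungDiagram} (h : α ≤ μ) : α.rowLen N = 0 :=
    Nat.eq_zero_of_le_zero (hN ▸ rowLen_le_rowLen_iff.2 h N)
  rw [card_eq_sum_rowLen (zero_of_le h₁'.le), card_eq_sum_rowLen (zero_of_le h₁.le),
    card_eq_sum_rowLen hN, card_eq_sum_rowLen (zero_of_le (h₂.le.trans h₁.le)),
    rowLen_toggleDiagram h₁ h₂, sum_toggle_add_sum h₁ h₂ hN]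

lemma toggleDiagram_mem {a b : ℕ} (hν : ν ∈ horizontalStrips a μ)
    (hκ : κ ∈ horizontalStrips b ν) :
    toggleDiagram μ κ ν ∈ horizontalStrips b μ ∧
      κ ∈ horizontalStrips a (toggleDiagram μ κ ν) := by
  rw [mem_horizontalStrips] at hν hκ
  have hcard := card_toggleDiagram hν.1 hκ.1
  obtain ⟨h₁, h₂⟩ := interlaces_toggle hν.1 hκ.1
  rw [← rowLen_toggleDiagram hν.1 hκ.1] at h₁ h₂
  simp only [mem_horizontalStrips]
  exact ⟨⟨h₁, by omega⟩, h₂, by omega⟩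

end toggleDiagram

lemma card_horizontalStrips_comm (a b : ℕ) (μ κ : YoungDiagram) :
    #{ν ∈ horizontalStrips a μ | κ ∈ horizontalStrips b ν} =
      #{ν ∈ horizontalStrips b μ | κ ∈ horizontalStrips a ν} := by
  have maps (a b : ℕ) : ∀ ν ∈ ({ν ∈ horizontalStrips a μ | κ ∈ horizontalStrips b ν} : Finset _),
      toggleDiagram μ κ ν ∈
        ({ν ∈ horizontalStrips b μ | κ ∈ horizontalStrips a ν} : Finset _) := by
    simp only [Finset.mem_filter]
    exact fun ν hν => toggleDiagram_mem hν.1 hν.2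
  have invol (a b : ℕ) : ∀ ν ∈ ({ν ∈ horizontalStrips a μ | κ ∈ horizontalStrips b ν} : Finset _),
      toggleDiagram μ κ (toggleDiagram μ κ ν) = ν := by
    simp only [Finset.mem_filter, mem_horizontalStrips]
    exact fun ν hν => toggleDiagram_toggleDiagram hν.1.1 hν.2.1
  exact Finset.card_bij' (fun ν _ => toggleDiagram μ κ ν) (fun ν _ => toggleDiagram μ κ ν)
    (maps a b) (maps b a) (invol a b) (invol b a)

lemma ncard_covers_interlaces (ρ ν : YoungDiagram) :
    {μ | Covers μ ρ ∧ Interlaces μ.rowLen ν.rowLen}.ncard =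
      (addableRows ρ.rowLen ν.rowLen).ncard := by
  rw [← Set.ncard_image_of_injective _ rowLen_injective,
    ← Set.ncard_image_of_injective _ (add_single_injective ρ.rowLen)]
  congr 1
  ext f
  constructor
  · rintro ⟨μ, ⟨hμ, hμν⟩, rfl⟩
    obtain ⟨i, hi⟩ := covers_iff.1 hμ
    rw [hi] at hμν ⊢
    exact ⟨i, hμν, rfl⟩
  · rintro ⟨i, hi, rfl⟩
    obtain ⟨μ, hμ⟩ := hi.exists_rowLen_eq_left
    rw [addableRows, Set.mem_ofPred_eq, ← hμ] at hi
    exact ⟨μ, ⟨covers_iff.2 ⟨i, hμ⟩, hi⟩, hμ⟩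

lemma ncard_interlaces_covers (ρ ν : YoungDiagram) :
    {κ | Interlaces ρ.rowLen κ.rowLen ∧ Covers ν κ}.ncard =
      (removableRows ρ.rowLen ν.rowLen).ncard := by
  rw [← Set.ncard_image_of_injective _ rowLen_injective,
    ← ((sub_single_injOn ν.rowLen).mono fun i hi => hi.1).ncard_image]
  congr 1
  ext f
  constructor
  · rintro ⟨κ, ⟨hκ, hνκ⟩, rfl⟩
    obtain ⟨i, hi⟩ := covers_iff.1 hνκ
    obtain ⟨hpos, hi⟩ := eq_add_single_iff.1 hi
    rw [hi] at hκ ⊢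
    exact ⟨i, ⟨hpos, hκ⟩, rfl⟩
  · rintro ⟨i, ⟨hpos, hi⟩, rfl⟩
    obtain ⟨κ, hκ⟩ := hi.exists_rowLen_eq_right
    rw [← hκ] at hi
    exact ⟨κ, ⟨hi, covers_iff.2 ⟨i, eq_add_single_iff.2 ⟨hpos, hκ⟩⟩⟩, hκ⟩

lemma card_upperCovers_horizontalStrips (k : ℕ) (ρ ν : YoungDiagram) :
    #{μ ∈ upperCovers ρ | ν ∈ horizontalStrips (k + 1) μ} =
      #{κ ∈ horizontalStrips (k + 1) ρ | ν ∈ upperCovers κ} +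
        if ν ∈ horizontalStrips k ρ then 1 else 0 := by
  by_cases hcard : ν.card + k = ρ.card
  · have hup : (({μ ∈ upperCovers ρ | ν ∈ horizontalStrips (k + 1) μ} : Finset _) : Set _) =
        {μ | Covers μ ρ ∧ Interlaces μ.rowLen ν.rowLen} := by
      ext μ
      simp only [Finset.coe_filter, mem_upperCovers, mem_horizontalStrips, Set.mem_ofPred_eq]
      refine and_congr_right fun hμ => and_iff_left ?_
      have := card_eq_of_covers hμ
      omega
    have hdown : (({κ ∈ horizontalStrips (k + 1) ρ | ν ∈ upperCovers κ} : Finset _) : Set _) =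
        {κ | Interlaces ρ.rowLen κ.rowLen ∧ Covers ν κ} := by
      ext κ
      simp only [Finset.coe_filter, mem_upperCovers, mem_horizontalStrips, Set.mem_ofPred_eq]
      refine and_congr_left fun hκ => and_iff_left ?_
      have := card_eq_of_covers hκ
      omega
    rw [← Set.ncard_coe_finset, ← Set.ncard_coe_finset, hup, hdown, ncard_covers_interlaces,
      ncard_interlaces_covers, ncard_addableRows (rowLen_antitone ρ) (rowLen_antitone ν)
        (rowLen_card ν)]
    simp only [mem_horizontalStrips, hcard, and_true]
  · have hup : ({μ ∈ upperCovers ρ | ν ∈ horizontalStrips (k + 1) μ} : Finset _) = ∅ := by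
      refine Finset.filter_eq_empty_iff.2 fun μ hμ hν => hcard ?_
      have := card_eq_of_covers (mem_upperCovers.1 hμ)
      have := (mem_horizontalStrips.1 hν).2
      omega
    have hdown : ({κ ∈ horizontalStrips (k + 1) ρ | ν ∈ upperCovers κ} : Finset _) = ∅ := by
      refine Finset.filter_eq_empty_iff.2 fun κ hκ hν => hcard ?_
      have := card_eq_of_covers (mem_upperCovers.1 hν)
      have := (mem_horizontalStrips.1 hκ).2
      omega
    rw [hup, hdown, if_neg fun h => hcard (mem_horizontalStrips.1 h).2]
    rfl

/-! ### Pieri operators -/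

section neighborSum

variable {α M : Type*} [AddCommMonoid M]

/-- The operator on functions `α → M` that sums a function over the neighbors `t x` of each point
`x`. -/
def neighborSum (t : α → Finset α) : Module.End ℕ (α → M) where
  toFun f x := ∑ y ∈ t x, f y
  map_add' _ _ := funext fun _ => Finset.sum_add_distrib
  map_smul' _ _ := funext fun _ => Finset.sum_nsmul _ _ _

lemma neighborSum_apply (t : α → Finset α) (f : α → M) (x : α) :
    neighborSum t f x = ∑ y ∈ t x, f y :=
  rfl

lemma neighborSum_neighborSum (s t : α → Finset α) (f : α → M) {x : α} {u : Finset α}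
    (hu : ∀ y ∈ s x, t y ⊆ u) :
    neighborSum s (neighborSum t f) x = ∑ z ∈ u, #{y ∈ s x | z ∈ t y} • f z := by
  simp only [neighborSum_apply, ← Finset.sum_const]
  refine Finset.sum_comm' fun y z => ?_
  rw [Finset.mem_filter]
  exact ⟨fun h => ⟨h, hu y h.1 h.2⟩, And.left⟩

lemma neighborSum_mul_eq_add {s t s' t' r : α → Finset α}
    (h : ∀ x z, #{y ∈ s x | z ∈ t y} = #{y ∈ s' x | z ∈ t' y} + if z ∈ r x then 1 else 0) :
    (neighborSum s * neighborSum t : Module.End ℕ (α → M)) =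
      neighborSum s' * neighborSum t' + neighborSum r := by
  refine LinearMap.ext fun f => funext fun x => ?_
  let u := (s x).biUnion t ∪ (s' x).biUnion t' ∪ r x
  have hst : ∀ y ∈ s x, t y ⊆ u := fun y hy =>
    (Finset.subset_biUnion_of_mem t hy).trans (by grind)
  have hst' : ∀ y ∈ s' x, t' y ⊆ u := fun y hy =>
    (Finset.subset_biUnion_of_mem t' hy).trans (by grind)
  have hr : neighborSum r f x = ∑ z ∈ u, (if z ∈ r x then 1 else 0) • f z := by
    simp only [ite_smul, one_smul, zero_smul, Finset.sum_ite_mem, neighborSum_apply]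
    rw [Finset.inter_eq_right.2 Finset.subset_union_right]
  rw [LinearMap.add_apply, Pi.add_apply, Module.End.mul_apply, Module.End.mul_apply,
    neighborSum_neighborSum s t f hst, neighborSum_neighborSum s' t' f hst', hr,
    ← Finset.sum_add_distrib]
  simp only [h, add_smul]

lemma neighborSum_mul_comm {s t : α → Finset α}
    (h : ∀ x z, #{y ∈ s x | z ∈ t y} = #{y ∈ t x | z ∈ s y}) :
    (neighborSum s * neighborSum t : Module.End ℕ (α → M)) = neighborSum t * neighborSum s := by
  have hempty : (neighborSum (fun _ => ∅) : Module.End ℕ (α → M)) = 0 := rfl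
  rw [neighborSum_mul_eq_add (s' := t) (t' := s) (r := fun _ => ∅) (by simpa using h), hempty,
    add_zero]

end neighborSum

/-- The operator which sums a function over all the diagrams obtained by removing a horizontal
strip with `k` cells. -/
def pieri (k : ℕ) : Module.End ℕ (YoungDiagram → ℕ) :=
  neighborSum (horizontalStrips k)

/-- The operator which sums a function over all the diagrams obtained by adding a cell. -/
def coverSum : Module.End ℕ (YoungDiagram → ℕ) :=
  neighborSum upperCovers

lemma pieri_mul_comm (a b : ℕ) : pieri a * pieri b = pieri b * pieri a :=
  neighborSum_mul_comm (card_horizontalStrips_comm a b)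

lemma coverSum_mul_pieri_succ (k : ℕ) :
    coverSum * pieri (k + 1) = pieri (k + 1) * coverSum + pieri k :=
  neighborSum_mul_eq_add (card_upperCovers_horizontalStrips k)

instance leftCommutative_pieri : LeftCommutative fun k => ⇑(pieri k) :=
  ⟨fun a b f => LinearMap.congr_fun (pieri_mul_comm a b) f⟩

/-- The number of semistandard tableaux of a given shape whose weight consists of the elements of
`s`, in some fixed order. It is obtained by removing one horizontal strip for each element
of `s`; the order is irrelevant because the Pieri operators commute. -/
def tableauCount (s : Multiset ℕ) : YoungDiagram → ℕ :=
  s.foldr (fun k => ⇑(pieri k)) (Pi.single ⊥ 1)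

lemma tableauCount_zero : tableauCount 0 = Pi.single ⊥ 1 :=
  rfl

lemma tableauCount_cons (k : ℕ) (s : Multiset ℕ) :
    tableauCount (k ::ₘ s) = pieri k (tableauCount s) :=
  Multiset.foldr_cons _ _ _ _

lemma coverSum_single_bot : coverSum (Pi.single ⊥ 1 : YoungDiagram → ℕ) = 0 := by
  ext ρ
  refine Finset.sum_eq_zero fun μ hμ => Pi.single_eq_of_ne ?_ _
  rintro rfl
  exact (Nat.succ_ne_zero _ (card_eq_of_covers (mem_upperCovers.1 hμ)).symm)

lemma coverSum_tableauCount {s : Multiset ℕ} (hs : 0 ∉ s) :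
    coverSum (tableauCount s) = (s.map fun k => tableauCount ((k - 1) ::ₘ s.erase k)).sum := by
  induction s using Multiset.induction with
  | empty => exact coverSum_single_bot
  | cons k s ih =>
    rw [Multiset.mem_cons, not_or] at hs
    obtain ⟨k, rfl⟩ := Nat.exists_eq_succ_of_ne_zero (Ne.symm hs.1)
    have hcomm : coverSum (pieri (k + 1) (tableauCount s)) =
        pieri (k + 1) (coverSum (tableauCount s)) + pieri k (tableauCount s) :=
      LinearMap.congr_fun (coverSum_mul_pieri_succ k) _
    rw [tableauCount_cons, hcomm, ih hs.2, map_multiset_sum, Multiset.map_map, Multiset.map_cons,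
      Multiset.sum_cons, Multiset.erase_cons_head, ← tableauCount_cons, add_comm]
    congr 2
    refine Multiset.map_congr rfl fun l hl => ?_
    rw [Function.comp_apply, ← tableauCount_cons, Multiset.cons_swap,
      Multiset.erase_cons_tail_of_mem hl]

/-! ### Removing the largest entries of a tableau -/

lemma interlaces_rowLen_iff {μ ν : YoungDiagram} :
    Interlaces μ.rowLen ν.rowLen ↔ ν ≤ μ ∧ ∀ i j, (i + 1, j) ∈ μ → (i, j) ∈ ν := by
  simp only [Interlaces, forall_and, ← rowLen_le_rowLen_iff, Pi.le_def,
    YoungDiagram.mem_iff_lt_rowLen]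
  exact and_congr_right fun _ => forall_congr' fun i =>
    ⟨fun h j hj => hj.trans_le h, le_of_forall_lt⟩

section tableau

variable {μ ν : YoungDiagram}

/-- The diagram formed by the cells of a tableau with entries less than `N`. -/
def sublevel (T : SemistandardYoungTableau μ) (N : ℕ) : YoungDiagram where
  cells := {c ∈ μ.cells | T c.1 c.2 < N}
  isLowerSet := by
    rintro ⟨i, j⟩ ⟨i', j'⟩ ⟨hi : i' ≤ i, hj : j' ≤ j⟩ hij
    simp only [Finset.coe_filter, YoungDiagram.mem_cells, Set.mem_ofPred_eq] at hij ⊢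
    refine ⟨μ.up_left_mem hi hj hij.1, ?_⟩
    calc T i' j' ≤ T i' j := T.row_weak_of_le hj (μ.up_left_mem hi le_rfl hij.1)
      _ ≤ T i j := T.col_weak hi hij.1
      _ < N := hij.2

lemma mem_sublevel {T : SemistandardYoungTableau μ} {N i j : ℕ} :
    (i, j) ∈ sublevel T N ↔ (i, j) ∈ μ ∧ T i j < N :=
  Finset.mem_filter

lemma interlaces_sublevel {T : SemistandardYoungTableau μ} {N : ℕ}
    (hT : ∀ i j, (i, j) ∈ μ → T i j < N + 1) :
    Interlaces μ.rowLen (sublevel T N).rowLen := by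
  refine interlaces_rowLen_iff.2 ⟨Finset.filter_subset _ _, fun i j hij => ?_⟩
  have hlt : T i j < T (i + 1) j := T.col_strict (Nat.lt_succ_self i) hij
  have := hT _ _ hij
  exact mem_sublevel.2 ⟨μ.up_left_mem (Nat.le_succ i) le_rfl hij, by omega⟩

/-- The restriction of a tableau to a smaller diagram. -/
def restrict (T : SemistandardYoungTableau μ) (h : ν ≤ μ) : SemistandardYoungTableau ν where
  entry i j := if (i, j) ∈ ν then T i j else 0
  row_weak' hj hmem := by
    rw [if_pos hmem, if_pos (ν.up_left_mem le_rfl hj.le hmem)]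
    exact T.row_weak hj (h hmem)
  col_strict' hi hmem := by
    rw [if_pos hmem, if_pos (ν.up_left_mem hi.le le_rfl hmem)]
    exact T.col_strict hi (h hmem)
  zeros' hmem := if_neg hmem

lemma restrict_apply (T : SemistandardYoungTableau μ) (h : ν ≤ μ) (i j : ℕ) :
    restrict T h i j = if (i, j) ∈ ν then T i j else 0 :=
  rfl

/-- The extension of a tableau with entries less than `N` by a horizontal strip filled
with `N`. -/
def extend (T : SemistandardYoungTableau ν) {N : ℕ} (hT : ∀ i j, (i, j) ∈ ν → T i j < N)
    (h : Interlaces μ.rowLen ν.rowLen) : SemistandardYoungTableau μ where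
  entry i j := if (i, j) ∈ ν then T i j else if (i, j) ∈ μ then N else 0
  row_weak' {i j₁ j₂} hj hmem := by
    have hmem₁ : (i, j₁) ∈ μ := μ.up_left_mem le_rfl hj.le hmem
    by_cases hν : (i, j₂) ∈ ν
    · rw [if_pos hν, if_pos (ν.up_left_mem le_rfl hj.le hν)]
      exact T.row_weak hj hν
    · rw [if_neg hν, if_pos hmem, if_pos hmem₁]
      split_ifs with hν₁
      exacts [(hT _ _ hν₁).le, le_rfl]
  col_strict' {i₁ i₂ j} hi hmem := by
    have hν₁ : (i₁, j) ∈ ν :=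
      (interlaces_rowLen_iff.1 h).2 i₁ j (μ.up_left_mem hi le_rfl hmem)
    rw [if_pos hν₁, if_pos hmem]
    split_ifs with hν
    exacts [T.col_strict hi hν, hT _ _ hν₁]
  zeros' hmem := by rw [if_neg fun hν => hmem (h.le hν), if_neg hmem]

section extend

variable {T : SemistandardYoungTableau ν} {N : ℕ} (hT : ∀ i j, (i, j) ∈ ν → T i j < N)
  (h : Interlaces μ.rowLen ν.rowLen)

lemma extend_apply (i j : ℕ) :
    extend T hT h i j = if (i, j) ∈ ν then T i j else if (i, j) ∈ μ then N else 0 :=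
  rfl

lemma sublevel_extend : sublevel (extend T hT h) N = ν := by
  refine SetLike.ext fun ⟨i, j⟩ => ?_
  rw [mem_sublevel, extend_apply]
  have := hT i j
  have := @Interlaces.le _ _ h (i, j)
  grind

lemma restrict_extend (hνμ : ν ≤ μ) : restrict (extend T hT h) hνμ = T := by
  ext i j
  rw [restrict_apply, extend_apply]
  split_ifs with hν
  exacts [rfl, (T.zeros hν).symm]

lemma card_filter_extend_eq (k : ℕ) :
    #{c ∈ μ.cells | extend T hT h c.1 c.2 = k} =
      #{c ∈ ν.cells | T c.1 c.2 = k} + if k = N then μ.card - ν.card else 0 := by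
  have hsub : ν.cells ⊆ μ.cells := YoungDiagram.cells_subset_iff.2 h.le
  have hν : ({c ∈ ν.cells | extend T hT h c.1 c.2 = k} : Finset _) =
      {c ∈ ν.cells | T c.1 c.2 = k} :=
    Finset.filter_congr fun _ (hc : _ ∈ ν) => by rw [extend_apply, if_pos hc]
  have hdiff : ({c ∈ μ.cells \ ν.cells | extend T hT h c.1 c.2 = k} : Finset _) =
      {_c ∈ μ.cells \ ν.cells | k = N} := by
    refine Finset.filter_congr fun c hc => ?_
    obtain ⟨hμ, hν⟩ : (c.1, c.2) ∈ μ ∧ (c.1, c.2) ∉ ν := Finset.mem_sdiff.1 hc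
    rw [extend_apply, if_neg hν, if_pos hμ, eq_comm]
  rw [← Finset.union_sdiff_of_subset hsub, Finset.filter_union, Finset.card_union_of_disjoint
    (Finset.disjoint_filter_filter Finset.disjoint_sdiff), hν, hdiff, Finset.filter_const,
    apply_ite Finset.card, Finset.card_empty, Finset.card_sdiff_of_subset hsub]

end extend

lemma restrict_sublevel_lt {T : SemistandardYoungTableau μ} {N : ℕ} (hle : sublevel T N ≤ μ) :
    ∀ i j, (i, j) ∈ sublevel T N → restrict T hle i j < N := by
  intro i j hij
  rw [restrict_apply, if_pos hij]
  exact (mem_sublevel.1 hij).2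

lemma extend_restrict_sublevel {T : SemistandardYoungTableau μ} {N : ℕ}
    (hT : ∀ i j, (i, j) ∈ μ → T i j < N + 1) (h : Interlaces μ.rowLen (sublevel T N).rowLen) :
    extend (restrict T h.le) (restrict_sublevel_lt h.le) h = T := by
  ext i j
  have := hT i j
  have := T.zeros (i := i) (j := j)
  have := mem_sublevel (T := T) (N := N) (i := i) (j := j)
  rw [extend_apply, restrict_apply]
  grind

/-- The tableau `T` has `a i` entries equal to `i` for each `i < N`, and no entries `≥ N`. -/
def HasContent (N : ℕ) (a : ℕ → ℕ) (T : SemistandardYoungTableau μ) : Prop :=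
  ∀ i, #{c ∈ μ.cells | T c.1 c.2 = i} = if i < N then a i else 0

lemma HasContent.lt {N : ℕ} {a : ℕ → ℕ} {T : SemistandardYoungTableau μ} (hT : HasContent N a T) :
    ∀ i j, (i, j) ∈ μ → T i j < N := by
  intro i j hij
  by_contra hN
  have := hT (T i j)
  rw [if_neg hN, Finset.card_eq_zero, Finset.filter_eq_empty_iff] at this
  exact this ((YoungDiagram.mem_cells _).2 hij) rfl

lemma hasContent_extend_iff {T : SemistandardYoungTableau ν} {N : ℕ} {a : ℕ → ℕ}
    (hT : ∀ i j, (i, j) ∈ ν → T i j < N) (h : Interlaces μ.rowLen ν.rowLen) :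
    HasContent (N + 1) a (extend T hT h) ↔ HasContent N a T ∧ ν.card + a N = μ.card := by
  have hcard := card_le_card_of_le h.le
  have hN : #{c ∈ ν.cells | T c.1 c.2 = N} = 0 :=
    Finset.card_eq_zero.2 (Finset.filter_eq_empty_iff.2 fun c hc => (hT _ _ hc).ne)
  simp only [HasContent, card_filter_extend_eq]
  constructor
  · intro hext
    refine ⟨fun i => ?_, ?_⟩
    · obtain rfl | hi := eq_or_ne i N
      · simpa using hN
      · have := hext i
        grind
    · have := hext N
      grind
  · rintro ⟨hcontent, hstrip⟩ i
    have := hcontent i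
    grind

instance finite_hasContent (N : ℕ) (a : ℕ → ℕ) :
    Finite {T : SemistandardYoungTableau μ // HasContent N a T} := by
  refine Finite.of_injective (β := μ.cells → Fin N)
    (fun T c => ⟨T.1 c.1.1 c.1.2, T.2.lt _ _ c.2⟩) fun T T' h => Subtype.ext ?_
  ext i j
  by_cases hij : (i, j) ∈ μ
  · exact congrArg Fin.val (congrFun h ⟨(i, j), hij⟩)
  · rw [T.1.zeros hij, T'.1.zeros hij]

/-- The tableau obtained by attaching a horizontal strip of `a N` entries `N`. -/
def glue (N : ℕ) (a : ℕ → ℕ)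
    (p : Σ ν : horizontalStrips (a N) μ, {T : SemistandardYoungTableau ν.1 // HasContent N a T}) :
    {T : SemistandardYoungTableau μ // HasContent (N + 1) a T} :=
  have hν := mem_horizontalStrips.1 p.1.2
  ⟨extend p.2.1 p.2.2.lt hν.1, (hasContent_extend_iff _ _).2 ⟨p.2.2, hν.2⟩⟩

lemma glue_bijective (N : ℕ) (a : ℕ → ℕ) : Function.Bijective (glue (μ := μ) N a) := by
  constructor
  · rintro ⟨⟨ν, hν⟩, T, hT⟩ ⟨⟨ν', hν'⟩, T', hT'⟩ hglue
    have h := (mem_horizontalStrips.1 hν).1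
    have h' := (mem_horizontalStrips.1 hν').1
    have hextend : extend T hT.lt h = extend T' hT'.lt h' := congrArg Subtype.val hglue
    obtain rfl : ν = ν' := calc
      ν = sublevel (extend T hT.lt h) N := (sublevel_extend hT.lt h).symm
      _ = sublevel (extend T' hT'.lt h') N := by rw [hextend]
      _ = ν' := sublevel_extend hT'.lt h'
    obtain rfl : T = T' := calc
      T = restrict (extend T hT.lt h) h.le := (restrict_extend hT.lt h h.le).symm
      _ = restrict (extend T' hT'.lt h') h.le := by rw [hextend]
      _ = T' := restrict_extend hT'.lt h' h.le
    rfl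
  · rintro ⟨T, hT⟩
    have h := interlaces_sublevel hT.lt
    have hext := extend_restrict_sublevel hT.lt h
    obtain ⟨hcontent, hcard⟩ := (hasContent_extend_iff _ h).1 (hext.symm ▸ hT)
    exact ⟨⟨⟨_, mem_horizontalStrips.2 ⟨h, hcard⟩⟩, restrict T h.le, hcontent⟩, Subtype.ext hext⟩

end tableau

lemma card_hasContent_zero (a : ℕ → ℕ) (μ : YoungDiagram) :
    Nat.card {T : SemistandardYoungTableau μ // HasContent 0 a T} = tableauCount 0 μ := by
  obtain rfl | hμ := eq_or_ne μ ⊥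
  · rw [tableauCount_zero, Pi.single_eq_same, Nat.card_eq_one_iff_unique]
    refine ⟨⟨fun T T' => Subtype.ext ?_⟩, ⟨⟨default, fun i => by simp⟩⟩⟩
    ext i j
    rw [T.1.zeros (YoungDiagram.notMem_bot _), T'.1.zeros (YoungDiagram.notMem_bot _)]
  · rw [tableauCount_zero, Pi.single_eq_of_ne hμ, Nat.card_eq_zero]
    refine Or.inl ⟨fun T => hμ (eq_bot_iff.2 fun c hc => ?_)⟩
    exact absurd (T.2.lt _ _ hc) (Nat.not_lt_zero _)

lemma card_hasContent (N : ℕ) (a : ℕ → ℕ) (μ : YoungDiagram) :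
    Nat.card {T : SemistandardYoungTableau μ // HasContent N a T} =
      tableauCount ((Multiset.range N).map a) μ := by
  induction N generalizing μ with
  | zero => exact card_hasContent_zero a μ
  | succ N ih =>
    rw [← Nat.card_congr (Equiv.ofBijective _ (glue_bijective N a)), Nat.card_sigma,
      Multiset.range_succ, Multiset.map_cons, tableauCount_cons, pieri, neighborSum_apply]
    simp only [ih]
    exact Finset.sum_coe_sort _ (tableauCount ((Multiset.range N).map a))

lemma kostka_eq_tableauCount {lam : YoungDiagram} {N : ℕ} (hN : lam.rowLen N = 0)
    (μ : YoungDiagram) :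
    kostka μ lam = tableauCount ((Multiset.range N).map lam.rowLen) μ := by
  rw [kostka, ← card_hasContent]
  refine congrArg (fun p => Nat.card (Subtype p)) (funext fun T => ?_)
  refine forall_congr fun i => ?_
  congr 1
  split_ifs with hi
  · rfl
  · exact Nat.eq_zero_of_le_zero (hN ▸ rowLen_antitone lam (not_lt.1 hi))

/-! ### Removing a cell from the weight -/

lemma kostka_eq_tableauCount_rowLens (μ lam : YoungDiagram) :
    kostka μ lam = tableauCount lam.rowLens μ :=
  kostka_eq_tableauCount (rowLen_eq_zero_iff.2 le_rfl) μ

lemma mem_rowLens {lam : YoungDiagram} {k : ℕ} :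
    k ∈ lam.rowLens ↔ 0 < k ∧ ∃ i, lam.rowLen i = k := by
  rw [YoungDiagram.rowLens, List.mem_map]
  constructor
  · rintro ⟨i, hi, rfl⟩
    have hne : lam.rowLen i ≠ 0 := fun h =>
      (List.mem_range.1 hi).not_ge (rowLen_eq_zero_iff.1 h)
    exact ⟨Nat.pos_of_ne_zero hne, i, rfl⟩
  · rintro ⟨hpos, i, rfl⟩
    exact ⟨i, List.mem_range.2 (not_le.1 fun h => hpos.ne' (rowLen_eq_zero_iff.2 h)), rfl⟩

section removeCell

variable {lam γ : YoungDiagram} {i : ℕ}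

lemma rowLen_pos_of_eq_add_single (h : lam.rowLen = γ.rowLen + Pi.single i 1) :
    0 < lam.rowLen i :=
  (eq_add_single_iff.1 h).1

lemma rowLen_succ_lt_of_eq_add_single (h : lam.rowLen = γ.rowLen + Pi.single i 1) :
    lam.rowLen (i + 1) < lam.rowLen i := by
  have := rowLen_antitone γ (Nat.le_succ i)
  simp only [h, Pi.add_apply, Pi.single_eq_same, Pi.single_apply]
  grind

lemma eq_of_rowLen_eq_of_rowLen_succ_lt {i' : ℕ} (hi : lam.rowLen (i + 1) < lam.rowLen i)
    (hi' : lam.rowLen (i' + 1) < lam.rowLen i') (h : lam.rowLen i = lam.rowLen i') : i = i' := by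
  have := @rowLen_antitone lam (i + 1) i'
  have := @rowLen_antitone lam (i' + 1) i
  grind

lemma exists_rowLen_eq_add_single (hi : lam.rowLen (i + 1) < lam.rowLen i) :
    ∃ γ : YoungDiagram, lam.rowLen = γ.rowLen + Pi.single i 1 := by
  have hanti : Antitone (lam.rowLen - Pi.single i 1) := antitone_nat_of_succ_le fun j => by
    have := rowLen_antitone lam (Nat.le_succ j)
    simp only [Pi.sub_apply, Pi.single_apply]
    grind
  obtain ⟨γ, hγ⟩ := exists_rowLen_eq (N := lam.card) hanti (by simp [rowLen_card])
  exact ⟨γ, eq_add_single_iff.2 ⟨Nat.zero_lt_of_lt hi, hγ⟩⟩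

lemma exists_last_row_of_mem_rowLens {k : ℕ} (hk : k ∈ lam.rowLens) :
    ∃ i, lam.rowLen i = k ∧ lam.rowLen (i + 1) < k := by
  obtain ⟨hpos, j, hj⟩ := mem_rowLens.1 hk
  have hcol i : k ≤ lam.rowLen i ↔ i < lam.colLen (k - 1) := by
    rw [← YoungDiagram.mem_iff_lt_colLen, YoungDiagram.mem_iff_lt_rowLen]
    omega
  have hj_lt : j < lam.colLen (k - 1) := (hcol j).1 hj.ge
  obtain ⟨i, hi⟩ : ∃ i, lam.colLen (k - 1) = i + 1 :=
    Nat.exists_eq_succ_of_ne_zero (Nat.ne_zero_of_lt hj_lt)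
  refine ⟨i, le_antisymm (hj ▸ rowLen_antitone lam (by omega)) ((hcol i).2 (by omega)), ?_⟩
  exact not_le.1 fun h => by simpa [hi] using (hcol (i + 1)).1 h

lemma cCoeff_eq_count (h : lam.rowLen = γ.rowLen + Pi.single i 1) :
    cCoeff lam γ = (lam.rowLens : Multiset ℕ).count (lam.rowLen i) := by
  have hrow i' : γ.rowLen i' + 1 = lam.rowLen i' ↔ i' = i := by
    rw [h, Pi.add_apply, Pi.single_apply]
    grind
  have hset : {j | ∃ i', γ.rowLen i' + 1 = lam.rowLen i' ∧ lam.rowLen j = lam.rowLen i'} =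
      ({j ∈ Finset.range (lam.colLen 0) | lam.rowLen i = lam.rowLen j} : Finset ℕ) := by
    ext j
    have := rowLen_pos_of_eq_add_single h
    have := rowLen_eq_zero_iff (μ := lam) (i := j)
    simp only [hrow, exists_eq_left, Finset.coe_filter, Finset.mem_range, Set.mem_ofPred_eq]
    grind
  rw [cCoeff, hset, Set.ncard_coe_finset]
  exact (Multiset.count_map lam.rowLen (Multiset.range (lam.colLen 0)) (lam.rowLen i)).symm

lemma kostka_eq_tableauCount_erase (h : lam.rowLen = γ.rowLen + Pi.single i 1)
    (μ : YoungDiagram) :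
    kostka μ γ =
      tableauCount ((lam.rowLen i - 1) ::ₘ (lam.rowLens : Multiset ℕ).erase (lam.rowLen i)) μ := by
  obtain ⟨hpos, hγ⟩ := eq_add_single_iff.1 h
  have hzero : lam.rowLen (lam.colLen 0) = 0 := rowLen_eq_zero_iff.2 le_rfl
  have hi : i ∈ Multiset.range (lam.colLen 0) :=
    Multiset.mem_range.2 (not_le.1 fun hle => hpos.ne' (rowLen_eq_zero_iff.2 hle))
  have hrows : ((lam.rowLens : Multiset ℕ).erase (lam.rowLen i)) =
      ((Multiset.range (lam.colLen 0)).erase i).map γ.rowLen := by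
    calc (lam.rowLens : Multiset ℕ).erase (lam.rowLen i)
        = ((Multiset.range (lam.colLen 0)).erase i).map lam.rowLen :=
          (Multiset.map_erase_of_mem _ _ hi).symm
      _ = _ := Multiset.map_congr rfl fun j hj => ?_
    have hji : j ≠ i := ((Multiset.nodup_range _).mem_erase_iff.1 hj).1
    simp [h, hji]
  rw [hrows, kostka_eq_tableauCount (N := lam.colLen 0) (by simp [hγ, hzero]),
    ← Multiset.cons_erase hi, Multiset.map_cons, Multiset.erase_cons_head]
  simp [hγ]

end removeCell

lemma sum_lowerCovers (lam ρ : YoungDiagram) :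
    ∑ γ ∈ lowerCovers lam, cCoeff lam γ * kostka ρ γ =
      ((lam.rowLens : Multiset ℕ).map fun k =>
        tableauCount ((k - 1) ::ₘ (lam.rowLens : Multiset ℕ).erase k) ρ).sum := by
  choose! row hrow using fun γ (hγ : γ ∈ lowerCovers lam) => covers_iff.1 (mem_lowerCovers.1 hγ)
  rw [Finset.sum_multiset_map_count]
  refine Finset.sum_nbij (fun γ => lam.rowLen (row γ)) (fun γ hγ => ?_) ?_ (fun k hk => ?_)
    fun γ hγ => ?_
  · exact Multiset.mem_toFinset.2
      (mem_rowLens.2 ⟨rowLen_pos_of_eq_add_single (hrow γ hγ), _, rfl⟩)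
  · intro γ hγ γ' hγ' h
    have hlast := rowLen_succ_lt_of_eq_add_single (hrow γ hγ)
    have hlast' := rowLen_succ_lt_of_eq_add_single (hrow γ' hγ')
    have hrows : row γ = row γ' := eq_of_rowLen_eq_of_rowLen_succ_lt hlast hlast' h
    refine rowLen_injective (add_left_injective (Pi.single (row γ) 1) ?_)
    exact (hrow γ hγ).symm.trans (hrows ▸ hrow γ' hγ')
  · obtain ⟨i, rfl, hlast⟩ := exists_last_row_of_mem_rowLens (Multiset.mem_toFinset.1 hk)
    obtain ⟨γ, hi⟩ := exists_rowLen_eq_add_single hlast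
    have hγ : γ ∈ lowerCovers lam := mem_lowerCovers.2 (covers_iff.2 ⟨i, hi⟩)
    exact ⟨γ, hγ, congrArg _ (add_single_injective _ ((hrow γ hγ).symm.trans hi))⟩
  · rw [cCoeff_eq_count (hrow γ hγ), kostka_eq_tableauCount_erase (hrow γ hγ), smul_eq_mul]

lemma sum_upperCovers (lam ρ : YoungDiagram) :
    ∑ μ ∈ upperCovers ρ, kostka μ lam =
      ((lam.rowLens : Multiset ℕ).map fun k =>
        tableauCount ((k - 1) ::ₘ (lam.rowLens : Multiset ℕ).erase k) ρ).sum := by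
  have hpos : 0 ∉ (lam.rowLens : Multiset ℕ) := fun h => (mem_rowLens.1 h).1.ne rfl
  calc ∑ μ ∈ upperCovers ρ, kostka μ lam = coverSum (tableauCount lam.rowLens) ρ :=
        Finset.sum_congr rfl fun μ _ => kostka_eq_tableauCount_rowLens μ lam
    _ = _ := by
        rw [coverSum_tableauCount hpos, Pi.multiset_sum_apply, Multiset.map_map]
        rfl

end Kostka

theorem kostka_recurrence_general (lam rho : YoungDiagram) :
    ∑ᶠ (mu : YoungDiagram) (_ : Covers mu rho), kostka mu lam =
      ∑ᶠ (ga : YoungDiagram) (_ : Covers lam ga), cCoeff lam ga * kostka rho ga := by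
  calc ∑ᶠ (mu : YoungDiagram) (_ : Covers mu rho), kostka mu lam
      = ∑ mu ∈ Kostka.upperCovers rho, kostka mu lam := by
        simp only [← Kostka.mem_upperCovers, finsum_mem_finset_eq_sum]
    _ = ∑ ga ∈ Kostka.lowerCovers lam, cCoeff lam ga * kostka rho ga := by
        rw [Kostka.sum_upperCovers, Kostka.sum_lowerCovers]
    _ = _ := by
        simp only [← Kostka.mem_lowerCovers, finsum_mem_finset_eq_sum]

/-- Recurrence for the Kostka numbers:
`Σ_{μ ⊢ n, μ ≻ ρ} K(μ,λ) = Σ_{γ ⊢ n-1, γ ≺ λ} c(λ,γ) · K(ρ,γ)`. -/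
theorem kostka_recurrence (n : ℕ) (hn : 1 ≤ n) (lam rho : YoungDiagram)
    (hlam : lam.card = n) (hrho : rho.card = n - 1) :
    ∑ᶠ (mu : YoungDiagram) (_ : mu.card = n ∧ Covers mu rho), kostka mu lam =
      ∑ᶠ (ga : YoungDiagram) (_ : ga.card = n - 1 ∧ Covers lam ga),
        cCoeff lam ga * kostka rho ga := by
  have hup mu : mu.card = n ∧ Covers mu rho ↔ Covers mu rho :=
    and_iff_right_of_imp fun h => by rw [Kostka.card_eq_of_covers h]; omega
  have hdown ga : ga.card = n - 1 ∧ Covers lam ga ↔ Covers lam ga :=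
    and_iff_right_of_imp fun h => by have := Kostka.card_eq_of_covers h; omega
  simpa only [hup, hdown] using kostka_recurrence_general lam rho

end
end

section
/- Let n ≥ 1 and 0 ≤ k ≤ ⌊n/2⌋. Then the space F_k of square-free k-linear forms in n variables decomposes as the internal direct sum F_k = L₀ ⊕ L₁ ⊕ … ⊕ L_k of the subspaces L_l, 0 ≤ l ≤ k; each L_l is invariant under the action of S_n permuting the variables. -/
open scoped Classical

noncomputable section

open MvPolynomial

/-- The space of square-free `k`-linear forms in `n` variables: the span of the products
of `k` distinct variables. -/
noncomputable def Fspace (n k : ℕ) : Submodule ℂ (MvPolynomial (Fin n) ℂ) :=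
  Submodule.span ℂ {p | ∃ s : Finset (Fin n), s.card = k ∧ p = ∏ i ∈ s, X i}

/-- The elementary symmetric polynomial of degree `p` in the variables indexed by `s`. -/
noncomputable def esymmOn (n : ℕ) (s : Finset (Fin n)) (p : ℕ) : MvPolynomial (Fin n) ℂ :=
  ∑ t ∈ Finset.powersetCard p s, ∏ i ∈ t, X i

/-- The generator `X_I = (x_{i₁}-x_{i₂})⋯(x_{i_{2l-1}}-x_{i_{2l}}) · σ_{k-l}({x_j : j ∉ I})`
attached to a tuple `I` of `2l` distinct indices. -/
noncomputable def XIform (n k l : ℕ) (I : Fin (2 * l) ↪ Fin n) : MvPolynomial (Fin n) ℂ :=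
  (∏ t : Fin l,
      (X (I ⟨2 * t.1, by have := t.isLt; omega⟩) - X (I ⟨2 * t.1 + 1, by have := t.isLt; omega⟩))) *
    esymmOn n (Finset.univ.filter fun j => j ∉ Set.range I) (k - l)

/-- The subspace `L_l ⊆ F_k`: the span of the forms `X_I` over all tuples `I` of `2l`
distinct indices. -/
noncomputable def Lsub (n k l : ℕ) : Submodule ℂ (MvPolynomial (Fin n) ℂ) :=
  Submodule.span ℂ (Set.range (XIform n k l))

/-!
Two operators move between consecutive degrees `k`: the lowering operator `D = ∑ ∂ᵢ` and the raising
operator `U`, which sends a square-free monomial `x_S` to `∑_{j ∉ S} x_j x_S`. Both act on the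
factor `σ_p` of `X_I` only: the product of differences is killed by `D`, and `U` passes through it
with the variables outside `I` left to act. Hence `U ∘ D` multiplies every `X_I ∈ L_l` by
`(n - l - k + 1) (k - l)`. These scalars are distinct for distinct `l ≤ n / 2`, and `L_l = 0` for
larger `l`, so the `L_l` are independent.

For the spanning property, let `P` be a product of `l` differences in the variables indexed by `J`,
let `x_r` be a square-free monomial with `r` disjoint from `J`, and let `C` be the complement of
`r ∪ J`. For `a ∈ C`,
`|C| · P x_a x_r = ∑_{b ∈ C} P (x_a - x_b) x_r + U (P x_r)`,
which proves `P x_r ∈ L₀ + L₁ + …` by induction on `|r|`, since `U` preserves sums of the `L_l`.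
-/

section General

theorem sum_fin_two_mul {M : Type*} [AddCommMonoid M] {l : ℕ} (f : Fin (2 * l) → M) :
    ∑ i, f i = ∑ t : Fin l, (f ⟨2 * t, by omega⟩ + f ⟨2 * t + 1, by omega⟩) := by
  induction l with
  | zero => rfl
  | succ l ih =>
    calc ∑ i, f i
      _ = ∑ i : Fin (2 * l), f (i.castLE (by omega)) + f ⟨2 * l, by omega⟩ +
            f ⟨2 * l + 1, by omega⟩ :=
        (Fin.sum_univ_castSucc (n := 2 * l + 1) f).trans
          (congrArg (· + _) (Fin.sum_univ_castSucc _))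
      _ = ∑ t : Fin (l + 1), (f ⟨2 * t, by omega⟩ + f ⟨2 * t + 1, by omega⟩) := by
        rw [ih, add_assoc, Fin.sum_univ_castSucc]
        rfl

theorem multiset_esymm_cons {A : Type*} [CommSemiring A] (a : A) (s : Multiset A) (p : ℕ) :
    (a ::ₘ s).esymm (p + 1) = s.esymm (p + 1) + a * s.esymm p := by
  simp [Multiset.esymm, Multiset.powersetCard_cons, Multiset.sum_map_mul_left]

theorem derivation_prod_of_eq_mul {R A ι : Type*} [CommSemiring R] [CommSemiring A] [Algebra R A]
    (d : Derivation R A A) {s : Finset ι} {f g : ι → A} (h : ∀ i ∈ s, d (f i) = g i * f i) :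
    d (∏ i ∈ s, f i) = (∑ i ∈ s, g i) * ∏ i ∈ s, f i := by
  induction s using Finset.induction_on with
  | empty => simp
  | insert a s ha ih =>
    rw [Finset.prod_insert ha, Finset.sum_insert ha, d.leibniz, h a (Finset.mem_insert_self a s),
      ih fun i hi => h i (Finset.mem_insert_of_mem hi), smul_eq_mul, smul_eq_mul]
    ring

variable {R A : Type*} [CommSemiring R] [CommRing A] [Algebra R A] (d : Derivation R A A)

theorem derivation_esymm_of_eq_one {s : Multiset A} (h : ∀ a ∈ s, d a = 1) (p : ℕ) :
    d (s.esymm (p + 1)) = (s.card - p : A) * s.esymm p := by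
  induction s using Multiset.induction_on generalizing p with
  | empty => cases p <;> simp [Multiset.esymm, Multiset.powersetCard_zero_right]
  | cons a s ih =>
    have ih := ih fun b hb => h b (Multiset.mem_cons_of_mem hb)
    rw [multiset_esymm_cons, map_add, d.leibniz, ih, h a (Multiset.mem_cons_self a s),
      Multiset.card_cons]
    cases p with
    | zero => simp [Multiset.esymm]
    | succ p =>
      rw [ih, multiset_esymm_cons]
      simp only [smul_eq_mul]
      push_cast
      ring

theorem derivation_esymm_of_eq_sq {s : Multiset A} (h : ∀ a ∈ s, d a = a ^ 2) (p : ℕ) :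
    d (s.esymm p) = s.sum * s.esymm p - (p + 1) * s.esymm (p + 1) := by
  induction s using Multiset.induction_on generalizing p with
  | empty => cases p <;> simp [Multiset.esymm, Multiset.powersetCard_zero_right]
  | cons a s ih =>
    have ih := ih fun b hb => h b (Multiset.mem_cons_of_mem hb)
    cases p with
    | zero => simp [Multiset.esymm, Multiset.powersetCard_one, add_comm]
    | succ p =>
      rw [multiset_esymm_cons, multiset_esymm_cons, map_add, d.leibniz, ih, ih,
        h a (Multiset.mem_cons_self a s), Multiset.sum_cons]
      simp only [smul_eq_mul]
      push_cast
      ring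

end General

section Operators

variable (σ R : Type*) [CommSemiring R]

/-- The lowering operator `∑ ∂ᵢ`. -/
def lowering : Derivation R (MvPolynomial σ R) (MvPolynomial σ R) :=
  mkDerivation R fun _ => 1

/-- The derivation `∑ xᵢ² ∂ᵢ`, which multiplies a square-free monomial by the sum of its
variables. -/
def sqDerivation : Derivation R (MvPolynomial σ R) (MvPolynomial σ R) :=
  mkDerivation R fun i => X i ^ 2

variable {σ R}

theorem lowering_X (i : σ) : lowering σ R (X i) = 1 := mkDerivation_X _ _ _

theorem sqDerivation_X (i : σ) : sqDerivation σ R (X i) = X i ^ 2 := mkDerivation_X _ _ _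

theorem sqDerivation_prod_X (r : Finset σ) :
    sqDerivation σ R (∏ i ∈ r, X i) = (∑ i ∈ r, X i) * ∏ i ∈ r, X i :=
  derivation_prod_of_eq_mul _ fun i _ => by rw [sqDerivation_X, sq]

/-- The raising operator. Subtracting `sqDerivation` removes the non-square-free terms of
`(∑ xᵢ) p`, so that a square-free monomial `x_S` is sent to `∑_{j ∉ S} x_j x_S`. -/
def raising (σ R : Type*) [Fintype σ] [CommRing R] : Module.End R (MvPolynomial σ R) :=
  LinearMap.mulLeft R (∑ i, X i) - (sqDerivation σ R).toLinearMap

theorem raising_apply {σ R : Type*} [Fintype σ] [CommRing R] (p : MvPolynomial σ R) :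
    raising σ R p = (∑ i, X i) * p - sqDerivation σ R p := rfl

end Operators

section PairDiffProd

variable {σ R : Type*} [CommRing R] {l : ℕ}

variable (R) in
/-- The product `(x_{i₁} - x_{i₂}) ⋯ (x_{i_{2l-1}} - x_{i_{2l}})` of differences attached to a tuple
of `2l` indices; it is the first factor of `X_I`. -/
def pairDiffProd (I : Fin (2 * l) → σ) : MvPolynomial σ R :=
  ∏ t : Fin l, (X (I ⟨2 * t, by omega⟩) - X (I ⟨2 * t + 1, by omega⟩))

theorem pairDiffProd_succ (I : Fin (2 * (l + 1)) → σ) :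
    pairDiffProd R I = pairDiffProd R (fun i : Fin (2 * l) => I (i.castLE (by omega))) *
      (X (I ⟨2 * l, by omega⟩) - X (I ⟨2 * l + 1, by omega⟩)) :=
  Fin.prod_univ_castSucc _

theorem lowering_pairDiffProd (I : Fin (2 * l) → σ) :
    lowering σ R (pairDiffProd R I) = 0 := by
  refine (derivation_prod_of_eq_mul _ (g := 0) fun t _ => ?_).trans (by simp)
  simp [lowering_X]

theorem sqDerivation_pairDiffProd (I : Fin (2 * l) → σ) :
    sqDerivation σ R (pairDiffProd R I) = (∑ i, X (I i)) * pairDiffProd R I := by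
  rw [sum_fin_two_mul]
  refine derivation_prod_of_eq_mul _ fun t _ => ?_
  rw [map_sub, sqDerivation_X, sqDerivation_X]
  ring

theorem rename_pairDiffProd {τ : Type*} (g : σ → τ) (I : Fin (2 * l) → σ) :
    rename g (pairDiffProd R I) = pairDiffProd R (g ∘ I) := by
  simp [pairDiffProd]

theorem raising_pairDiffProd_mul [Fintype σ] [DecidableEq σ] (I : Fin (2 * l) ↪ σ)
    (q : MvPolynomial σ R) :
    raising σ R (pairDiffProd R I * q) =
      pairDiffProd R I * ((∑ i ∈ (Finset.univ.map I)ᶜ, X i) * q - sqDerivation σ R q) := by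
  rw [raising_apply, Derivation.leibniz, sqDerivation_pairDiffProd,
    ← Finset.sum_add_sum_compl (Finset.univ.map I), Finset.sum_map]
  simp only [smul_eq_mul]
  ring

theorem raising_pairDiffProd_mul_prod_X [Fintype σ] [DecidableEq σ] (I : Fin (2 * l) ↪ σ)
    {r : Finset σ} (hr : Disjoint r (Finset.univ.map I)) :
    raising σ R (pairDiffProd R I * ∏ i ∈ r, X i) =
      ∑ b ∈ (r ∪ Finset.univ.map I)ᶜ, pairDiffProd R I * (X b * ∏ i ∈ r, X i) := by
  have hsum : ∑ i ∈ (Finset.univ.map I)ᶜ, (X i : MvPolynomial σ R) =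
      ∑ i ∈ r, X i + ∑ i ∈ (r ∪ Finset.univ.map I)ᶜ, X i := by
    rw [← Finset.sum_sdiff (Finset.subset_compl_iff_disjoint_right.2 hr), add_comm,
      Finset.compl_union, Finset.inter_comm, ← Finset.sdiff_eq_inter_compl]
  rw [raising_pairDiffProd_mul, sqDerivation_prod_X, hsum, ← Finset.mul_sum, ← Finset.sum_mul]
  ring

theorem card_smul_pairDiffProd_mul_X_mul_prod_X [Fintype σ] [DecidableEq σ] (I : Fin (2 * l) ↪ σ)
    {r : Finset σ} (hr : Disjoint r (Finset.univ.map I)) (a : σ) :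
    (r ∪ Finset.univ.map I)ᶜ.card • (pairDiffProd R I * (X a * ∏ i ∈ r, X i)) =
      ∑ b ∈ (r ∪ Finset.univ.map I)ᶜ, pairDiffProd R I * (X a - X b) * ∏ i ∈ r, X i +
        raising σ R (pairDiffProd R I * ∏ i ∈ r, X i) := by
  rw [raising_pairDiffProd_mul_prod_X I hr, ← Finset.sum_add_distrib, ← Finset.sum_const]
  exact Finset.sum_congr rfl fun b _ => by ring

theorem exists_pairDiffProd_eq_mul_sub [DecidableEq σ] (I : Fin (2 * l) ↪ σ) {a b : σ} (hab : a ≠ b)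
    (ha : a ∉ Finset.univ.map I) (hb : b ∉ Finset.univ.map I) :
    ∃ I' : Fin (2 * (l + 1)) ↪ σ, pairDiffProd R I' = pairDiffProd R I * (X a - X b) ∧
      Finset.univ.map I' = insert a (insert b (Finset.univ.map I)) := by
  have ha' : a ∉ Set.range I := by simpa using ha
  have hb' : b ∉ Set.range (Fin.Embedding.snoc I ha') := by
    simpa [Fin.range_snoc, hab.symm] using hb
  let I' : Fin (2 * (l + 1)) ↪ σ := Fin.Embedding.snoc (Fin.Embedding.snoc I ha') hb'
  have hI'I : (fun i : Fin (2 * l) => I' (i.castLE (by omega))) = I :=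
    funext fun i => Fin.Embedding.snoc_castSucc.trans (Fin.Embedding.snoc_castSucc (i := i))
  have hI'a : I' ⟨2 * l, by omega⟩ = a :=
    (Fin.Embedding.snoc_castSucc (i := Fin.last _)).trans Fin.Embedding.snoc_last
  have hI'b : I' ⟨2 * l + 1, by omega⟩ = b := Fin.Embedding.snoc_last
  refine ⟨I', by rw [pairDiffProd_succ, hI'I, hI'a, hI'b], Finset.coe_injective ?_⟩
  simp [I', Fin.range_snoc, Set.insert_comm]

end PairDiffProd

section Generators

variable {n k l : ℕ}

theorem esymmOn_eq_esymm (s : Finset (Fin n)) (p : ℕ) :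
    esymmOn n s p = (s.val.map X).esymm p :=
  (Finset.esymm_map_val X s p).symm

theorem rename_esymmOn {m : ℕ} (g : Fin n ↪ Fin m) (s : Finset (Fin n)) (p : ℕ) :
    rename g (esymmOn n s p) = esymmOn m (s.map g) p := by
  simp [esymmOn, Finset.powersetCard_map]

theorem XIform_eq (I : Fin (2 * l) ↪ Fin n) :
    XIform n k l I = pairDiffProd ℂ I * esymmOn n (Finset.univ.map I)ᶜ (k - l) := by
  have hcompl : (Finset.univ.filter fun j => j ∉ Set.range I) = (Finset.univ.map I)ᶜ := by
    ext; simp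
  rw [XIform, hcompl, pairDiffProd]

theorem rename_XIform (g : Equiv.Perm (Fin n)) (I : Fin (2 * l) ↪ Fin n) :
    rename g (XIform n k l I) = XIform n k l (I.trans g.toEmbedding) := by
  have hcompl : (Finset.univ.map I)ᶜ.map g.toEmbedding =
      (Finset.univ.map (I.trans g.toEmbedding))ᶜ := by
    ext j; simp [Equiv.eq_symm_apply]
  rw [XIform_eq, XIform_eq, map_mul, rename_pairDiffProd, ← hcompl, ← rename_esymmOn]
  rfl

theorem lowering_XIform_self (I : Fin (2 * l) ↪ Fin n) :
    lowering (Fin n) ℂ (XIform n l l I) = 0 := by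
  simp [XIform_eq, esymmOn, lowering_pairDiffProd]

theorem lowering_XIform (p : ℕ) (I : Fin (2 * l) ↪ Fin n) :
    lowering (Fin n) ℂ (XIform n (l + (p + 1)) l I) =
      (n - 2 * l - p : ℂ) • XIform n (l + p) l I := by
  have hcard : (((Finset.univ.map I)ᶜ.card : ℕ) : ℂ) = n - 2 * l := by
    have := Fintype.card_le_of_embedding I
    rw [Finset.card_compl, Finset.card_map, Finset.card_univ, Nat.cast_sub this]
    simp
  rw [XIform_eq, XIform_eq, Derivation.leibniz, lowering_pairDiffProd, Nat.add_sub_cancel_left,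
    Nat.add_sub_cancel_left, esymmOn_eq_esymm, esymmOn_eq_esymm,
    derivation_esymm_of_eq_one _ (by simp [lowering_X]), ← hcard, smul_eq_C_mul]
  simp only [smul_eq_mul, Multiset.card_map, Finset.card_val, map_sub, map_natCast]
  ring

theorem raising_XIform (p : ℕ) (I : Fin (2 * l) ↪ Fin n) :
    raising (Fin n) ℂ (XIform n (l + p) l I) =
      (p + 1 : ℂ) • XIform n (l + (p + 1)) l I := by
  rw [XIform_eq, XIform_eq, raising_pairDiffProd_mul, Nat.add_sub_cancel_left,
    Nat.add_sub_cancel_left, esymmOn_eq_esymm, esymmOn_eq_esymm,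
    derivation_esymm_of_eq_sq _ (by simp [sqDerivation_X]), smul_eq_C_mul]
  simp only [Finset.sum_eq_multiset_sum, map_add, map_natCast, map_one]
  ring

theorem pairDiffProd_mul_prod_X_mem_Fspace (I : Fin (2 * l) ↪ Fin n) {r : Finset (Fin n)}
    (hr : Disjoint r (Finset.univ.map I)) :
    pairDiffProd ℂ I * ∏ i ∈ r, X i ∈ Fspace n (l + r.card) := by
  induction l generalizing r with
  | zero => exact Submodule.subset_span ⟨r, by simp, by simp [pairDiffProd]⟩
  | succ l ih =>
    let I₀ : Fin (2 * l) ↪ Fin n := (Fin.castLEEmb (by omega)).trans I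
    have hdisj {m : ℕ} (hm : m < 2 * (l + 1)) (hlm : 2 * l ≤ m) :
        I ⟨m, hm⟩ ∉ r ∧ Disjoint (insert (I ⟨m, hm⟩) r) (Finset.univ.map I₀) := by
      have hmr : I ⟨m, hm⟩ ∉ r := Finset.disjoint_right.1 hr (by simp)
      have hmI₀ : I ⟨m, hm⟩ ∉ Finset.univ.map I₀ := by
        simpa [I₀, Fin.ext_iff] using fun i : Fin (2 * l) => (by omega : (i : ℕ) ≠ m)
      have hrI₀ : Disjoint r (Finset.univ.map I₀) := by
        rw [← Finset.map_map]
        exact hr.mono_right (Finset.map_subset_map.2 (Finset.subset_univ _))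
      exact ⟨hmr, Finset.disjoint_insert_left.2 ⟨hmI₀, hrI₀⟩⟩
    have hmem {m : ℕ} (hm : m < 2 * (l + 1)) (hlm : 2 * l ≤ m) :
        pairDiffProd ℂ I₀ * (X (I ⟨m, hm⟩) * ∏ i ∈ r, X i) ∈ Fspace n (l + 1 + r.card) := by
      obtain ⟨hmr, hdisj⟩ := hdisj hm hlm
      have := ih I₀ hdisj
      rwa [Finset.prod_insert hmr, Finset.card_insert_of_notMem hmr, ← add_assoc,
        add_right_comm] at this
    convert Submodule.sub_mem _ (hmem (m := 2 * l) (by omega) le_rfl)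
      (hmem (m := 2 * l + 1) (by omega) (by omega)) using 1
    rw [pairDiffProd_succ, ← mul_sub, ← sub_mul, ← mul_assoc]
    rfl

end Generators

section Decomposition

variable {n k l : ℕ}

theorem rename_mem_Lsub (g : Equiv.Perm (Fin n)) {p : MvPolynomial (Fin n) ℂ}
    (hp : p ∈ Lsub n k l) : rename g p ∈ Lsub n k l := by
  suffices h : Lsub n k l ≤ (Lsub n k l).comap (rename g).toLinearMap from h hp
  refine Submodule.span_le.2 ?_
  rintro _ ⟨I, rfl⟩
  exact Submodule.subset_span ⟨I.trans g.toEmbedding, (rename_XIform g I).symm⟩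

theorem Lsub_le_Fspace (hl : l ≤ k) : Lsub n k l ≤ Fspace n k := by
  refine Submodule.span_le.2 ?_
  rintro _ ⟨I, rfl⟩
  rw [SetLike.mem_coe, XIform_eq, esymmOn, Finset.mul_sum]
  refine Submodule.sum_mem _ fun t ht => ?_
  obtain ⟨htI, hcard⟩ := Finset.mem_powersetCard.1 ht
  have := pairDiffProd_mul_prod_X_mem_Fspace I (Finset.subset_compl_iff_disjoint_right.1 htI)
  rwa [hcard, Nat.add_sub_cancel' hl] at this

theorem Lsub_eq_bot (hl : n < 2 * l) : Lsub n k l = ⊥ := by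
  have : IsEmpty (Fin (2 * l) ↪ Fin n) := Function.Embedding.isEmpty_of_card_lt (by simpa using hl)
  rw [Lsub, Set.range_eq_empty, Submodule.span_empty]

theorem Lsub_le_eigenspace (hl : l ≤ k) :
    Lsub n k l ≤ Module.End.eigenspace (raising (Fin n) ℂ ∘ₗ (lowering (Fin n) ℂ).toLinearMap)
      ((n - l - k + 1) * (k - l)) := by
  refine Submodule.span_le.2 ?_
  rintro _ ⟨I, rfl⟩
  rw [SetLike.mem_coe, Module.End.mem_eigenspace_iff, LinearMap.comp_apply,
    Derivation.coeFn_coe]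
  obtain ⟨p, rfl⟩ := Nat.exists_eq_add_of_le hl
  cases p with
  | zero => simp [lowering_XIform_self]
  | succ p =>
    rw [lowering_XIform, map_smul, raising_XIform, smul_smul]
    congr 1
    push_cast
    ring

variable (n k) in
theorem iSupIndep_Lsub : iSupIndep fun l : Fin (k + 1) => Lsub n k l := by
  rw [← iSupIndep_ne_bot]
  have two_mul_le (l : {l : Fin (k + 1) // Lsub n k l ≠ ⊥}) : 2 * (l : ℕ) ≤ n :=
    not_lt.1 fun h => l.2 (Lsub_eq_bot h)
  let eigenvalue (l : {l : Fin (k + 1) // Lsub n k l ≠ ⊥}) : ℂ :=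
    (n - (l : ℕ) - k + 1) * (k - (l : ℕ))
  have eigenvalue_injective : Function.Injective eigenvalue := by
    intro l m hlm
    have hprod : (((l : ℕ) : ℂ) - (m : ℕ)) * (((l : ℕ) + (m : ℕ) : ℂ) - (n + 1)) = 0 := by
      linear_combination hlm
    have hne : ((l : ℕ) + (m : ℕ) : ℂ) - (n + 1) ≠ 0 := by
      have := two_mul_le l
      have := two_mul_le m
      rw [sub_ne_zero]
      norm_cast
      omega
    have hlm := sub_eq_zero.1 ((mul_eq_zero.1 hprod).resolve_right hne)
    exact Subtype.ext (Fin.ext (Nat.cast_injective hlm))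
  exact ((Module.End.eigenspaces_iSupIndep _).comp eigenvalue_injective).mono fun l =>
    Lsub_le_eigenspace (Nat.lt_succ_iff.1 l.1.2)

variable (n k) in
/-- The sum `L₀ + L₁ + … + L_k`. -/
def Lsum : Submodule ℂ (MvPolynomial (Fin n) ℂ) :=
  ⨆ l ∈ Finset.range (k + 1), Lsub n k l

theorem Lsub_le_Lsum (hl : l ≤ k) : Lsub n k l ≤ Lsum n k :=
  le_iSup₂_of_le l (Finset.mem_range_succ_iff.2 hl) le_rfl

theorem raising_mem_Lsum {p : MvPolynomial (Fin n) ℂ} (hp : p ∈ Lsum n k) :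
    raising (Fin n) ℂ p ∈ Lsum n (k + 1) := by
  suffices h : Lsum n k ≤ (Lsum n (k + 1)).comap (raising (Fin n) ℂ) from h hp
  refine iSup₂_le fun l hl => Submodule.span_le.2 ?_
  rintro _ ⟨I, rfl⟩
  obtain ⟨p, rfl⟩ := Nat.exists_eq_add_of_le (Finset.mem_range_succ_iff.1 hl)
  rw [SetLike.mem_coe, Submodule.mem_comap, raising_XIform]
  exact Submodule.smul_mem _ _ (Lsub_le_Lsum (by omega) (Submodule.subset_span ⟨I, rfl⟩))

theorem pairDiffProd_mul_prod_X_mem_Lsum (I : Fin (2 * l) ↪ Fin n) {r : Finset (Fin n)}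
    (hr : Disjoint r (Finset.univ.map I)) :
    pairDiffProd ℂ I * ∏ i ∈ r, X i ∈ Lsum n (l + r.card) := by
  induction r using Finset.induction_on generalizing l with
  | empty =>
    refine Lsub_le_Lsum (by omega) (Submodule.subset_span ⟨I, ?_⟩)
    simp [XIform_eq, esymmOn]
  | insert a r har ih =>
    obtain ⟨haI, hrI⟩ := Finset.disjoint_insert_left.1 hr
    rw [Finset.card_insert_of_notMem har, Finset.prod_insert har, ← add_assoc]
    have hdiff : ∀ b ∈ (r ∪ Finset.univ.map I)ᶜ,
        pairDiffProd ℂ I * (X a - X b) * ∏ i ∈ r, X i ∈ Lsum n (l + r.card + 1) := by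
      intro b hb
      obtain ⟨hbr, hbI⟩ : b ∉ r ∧ b ∉ Finset.univ.map I := by
        simpa only [Finset.mem_compl, Finset.mem_union, not_or] using hb
      obtain rfl | hab := eq_or_ne a b
      · simp
      obtain ⟨I', hprod, hmap⟩ := exists_pairDiffProd_eq_mul_sub (R := ℂ) I hab haI hbI
      have := ih I' (by simp [hmap, har, hbr, hrI])
      rwa [hprod, add_right_comm] at this
    have hcard : ((r ∪ Finset.univ.map I)ᶜ.card : ℂ) ≠ 0 :=
      Nat.cast_ne_zero.2 (Finset.card_ne_zero_of_mem (a := a) (by simp [har, haI]))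
    rw [← Submodule.smul_mem_iff _ hcard, Nat.cast_smul_eq_nsmul,
      card_smul_pairDiffProd_mul_X_mul_prod_X I hrI]
    exact Submodule.add_mem _ (Submodule.sum_mem _ hdiff) (raising_mem_Lsum (ih I hrI))

variable (n k) in
theorem Lsum_eq_Fspace : Lsum n k = Fspace n k := by
  refine le_antisymm (iSup₂_le fun l hl => Lsub_le_Fspace (Finset.mem_range_succ_iff.1 hl))
    (Submodule.span_le.2 ?_)
  rintro _ ⟨s, rfl, rfl⟩
  let I : Fin (2 * 0) ↪ Fin n := (finCongr (mul_zero 2)).toEmbedding.trans .ofIsEmpty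
  simpa [pairDiffProd] using pairDiffProd_mul_prod_X_mem_Lsum I (r := s) (by simp)

end Decomposition

theorem Fspace_direct_sum_general (n k : ℕ) :
    (∀ l, l ≤ k → ∀ g : Equiv.Perm (Fin n), ∀ p ∈ Lsub n k l,
        MvPolynomial.rename g p ∈ Lsub n k l) ∧
    (⨆ l ∈ Finset.range (k + 1), Lsub n k l) = Fspace n k ∧
    iSupIndep (fun l : Fin (k + 1) => Lsub n k (l : ℕ)) :=
  ⟨fun _ _ g _ hp => rename_mem_Lsub g hp, Lsum_eq_Fspace n k, iSupIndep_Lsub n k⟩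

/-- The space `F_k` of square-free `k`-linear forms in `n` variables decomposes as the
internal direct sum `F_k = L₀ ⊕ L₁ ⊕ … ⊕ L_k`, and each `L_l` is invariant under the
action of `S_n` permuting the variables. -/
theorem Fspace_direct_sum (n : ℕ) (hn : 1 ≤ n) (k : ℕ) (hk : k ≤ n / 2) :
    (∀ l, l ≤ k → ∀ g : Equiv.Perm (Fin n), ∀ p ∈ Lsub n k l,
        MvPolynomial.rename g p ∈ Lsub n k l) ∧
    (⨆ l ∈ Finset.range (k + 1), Lsub n k l) = Fspace n k ∧
    iSupIndep (fun l : Fin (k + 1) => Lsub n k (l : ℕ)) :=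
  Fspace_direct_sum_general n k

end
end
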